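/- Let Λ = ω₁ℤ + ω₂ℤ with ω₁ > 0 real, Im ω₂ > 0, and ω₁·Im ω₂ = π/2. For N ≥ 1 let Λ_N be the superlattice generated by ω₁' = (⌊√N⌋ω₁ + ω₂)/N and ω₂' = (−(N−⌊√N⌋²)ω₁ + ⌊√N⌋ω₂)/N, so that Λ ⊆ Λ_N with [Λ_N : Λ] = N, and let Λ'_N = √N·Λ_N, a lattice of covolume π/2. Let ζ₁, …, ζ_N ∈ ℂ be a complete set of representatives of the cosets of Λ in Λ_N. Then for all z ∈ ℂ∖Λ_N one has Σ_{j=1}^{N} U_{ℂ/Λ}(z, ζ_j) = log|σ_*^{Λ'_N}(√N·z)| − N|z|² − A_{Λ'_N}, where σ_*^{Λ'_N} and A_{Λ'_N} are the modified sigma function and the normalizing constant associated with the lattice Λ'_N. -/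

import Mathlib

open MeasureTheory

/-- The lattice `Λ = ω₁ℤ + ω₂ℤ` as a subset of `ℂ`. -/
def latticeSet (ω₁ ω₂ : ℂ) : Set ℂ :=
  {w : ℂ | ∃ m n : ℤ, w = (m : ℂ) * ω₁ + (n : ℂ) * ω₂}

/-- The Weierstrass sigma function of the lattice `ω₁ℤ + ω₂ℤ`. -/
noncomputable def wSigma (ω₁ ω₂ : ℂ) (z : ℂ) : ℂ :=
  z * ∏' p : {p : ℤ × ℤ // p ≠ 0},
      (1 - z / ((p.1.1 : ℂ) * ω₁ + (p.1.2 : ℂ) * ω₂)) *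
        Complex.exp (z / ((p.1.1 : ℂ) * ω₁ + (p.1.2 : ℂ) * ω₂) +
          z ^ 2 / (2 * ((p.1.1 : ℂ) * ω₁ + (p.1.2 : ℂ) * ω₂) ^ 2))

/-- The Weierstrass zeta function `ζ = σ'/σ`. -/
noncomputable def wZeta (ω₁ ω₂ : ℂ) (z : ℂ) : ℂ :=
  deriv (wSigma ω₁ ω₂) z / wSigma ω₁ ω₂ z

/-- The quasi-period `λ₁ = 2ζ(ω₁/2)`. -/
noncomputable def lambda1 (ω₁ ω₂ : ℂ) : ℂ := 2 * wZeta ω₁ ω₂ (ω₁ / 2)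

/-- The constant `b = 1 − λ₁/(2ω₁)`. -/
noncomputable def bconst (ω₁ ω₂ : ℂ) : ℂ := 1 - lambda1 ω₁ ω₂ / (2 * ω₁)

/-- The modified Weierstrass sigma function `σ_*(z) = e^{b z²} σ(z)`. -/
noncomputable def sigmaStar (ω₁ ω₂ : ℂ) (z : ℂ) : ℂ :=
  Complex.exp (bconst ω₁ ω₂ * z ^ 2) * wSigma ω₁ ω₂ z

/-- A fundamental domain of the lattice `ω₁ℤ + ω₂ℤ`. -/
def fundDomain (ω₁ ω₂ : ℂ) : Set ℂ :=
  (fun p : ℝ × ℝ => (p.1 : ℂ) * ω₁ + (p.2 : ℂ) * ω₂) ''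
    (Set.Ico (0 : ℝ) 1 ×ˢ Set.Ico (0 : ℝ) 1)

/-- The normalizing constant `A_Λ`. -/
noncomputable def Aconst (ω₁ ω₂ : ℂ) : ℝ :=
  2 / Real.pi * ∫ z in fundDomain ω₁ ω₂, (Real.log ‖sigmaStar ω₁ ω₂ z‖ - ‖z‖ ^ 2)

/-- The unipolar Green function of the torus `ℂ/Λ`. -/
noncomputable def Utorus (ω₁ ω₂ : ℂ) (z w : ℂ) : ℝ :=
  Real.log ‖sigmaStar ω₁ ω₂ (z - w)‖ - ‖z - w‖ ^ 2 - Aconst ω₁ ω₂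

/-- The monic first degree pseudopolynomial on the torus with root `α`. -/
noncomputable def pseudoPoly (ω₁ ω₂ : ℂ) (α z : ℂ) : ℂ :=
  Complex.exp (2 * Complex.I * ((((starRingEnd ℂ) α) * z).im : ℂ)) *
    (Complex.exp (-((‖z - α‖ ^ 2 : ℝ) : ℂ)) * sigmaStar ω₁ ω₂ (z - α))

/-!
The function `|σ_*(z)| exp (-|z|²)` is doubly periodic: for the period `ω₁` this is the choice of
`b`, and for `ω₂` it follows from Legendre's relation. Both `∏ⱼ |σ_*(z - ζⱼ)| exp (-|z - ζⱼ|²)` and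
`|σ_*^{Λ'}(√N z)| exp (-|√N z|²)` are `exp (-N |z|²)` times the modulus of an entire function. The
zeros of the second entire function are simple and are zeros of the first, so the quotient of the
two is entire, and it is bounded because its modulus is doubly periodic; by Liouville it is
constant. Integrating the logarithms over a fundamental domain of `Λ`, which has the area of one
of `Λ'`, identifies the constant.

Legendre's relation is proved by comparison with the odd theta function. The commutation of the two
quasi-periodicity relations shows that `η₁ ω₂ - η₂ ω₁ = 2πik` with `k` an integer, and a Gaussian
multiple of `σ` is then a theta function of degree `k`. An entire function of lower degree that
vanishes at the simple zeros of one of higher degree vanishes identically, again by Liouville;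
hence `k ≤ 1`, and `k > 0` because the Gaussian multiple of `σ` would otherwise be constant.
-/

namespace TorusGreen

open Filter Topology Pointwise

local notation "σ[" L "]" => wSigma (PeriodPair.ω₁ L) (PeriodPair.ω₂ L)
local notation "ζ[" L "]" => wZeta (PeriodPair.ω₁ L) (PeriodPair.ω₂ L)

section EntireFunctions

variable {f g : ℂ → ℂ}

theorem exists_differentiable_eq_mul (hf : Differentiable ℂ f) (hg : Differentiable ℂ g)
    (hsimple : ∀ w, g w = 0 → f w = 0 ∧ deriv g w ≠ 0) :
    ∃ q : ℂ → ℂ, Differentiable ℂ q ∧ ∀ z, f z = q z * g z := by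
  classical
  have differentiable_dslope {h : ℂ → ℂ} (hh : Differentiable ℂ h) (w : ℂ) :
      Differentiable ℂ (dslope h w) := by
    rw [← differentiableOn_univ, Complex.differentiableOn_dslope univ_mem]
    exact hh.differentiableOn
  have eq_sub_mul_dslope {h : ℂ → ℂ} {w : ℂ} (hw : h w = 0) (z : ℂ) :
      h z = (z - w) * dslope h w z := by
    simpa [hw] using (sub_smul_dslope h w z).symm
  refine ⟨fun z => if g z = 0 then deriv f z / deriv g z else f z / g z, fun w => ?_, fun z => ?_⟩
  · by_cases hw : g w = 0
    · obtain ⟨hfw, hgw⟩ := hsimple w hw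
      have hne : ∀ᶠ z in 𝓝 w, dslope g w z ≠ 0 :=
        (differentiable_dslope hg w).continuous.continuousAt.eventually_ne (by simpa using hgw)
      refine ((differentiable_dslope hf w w).div (differentiable_dslope hg w w)
        (by simpa using hgw)).congr_of_eventuallyEq ?_
      filter_upwards [hne] with z hz
      rcases eq_or_ne z w with rfl | hzw
      · simp [hw]
      · have hgz : g z ≠ 0 := by
          rw [eq_sub_mul_dslope hw]
          exact mul_ne_zero (sub_ne_zero.2 hzw) hz
        rw [if_neg hgz, eq_sub_mul_dslope hfw, eq_sub_mul_dslope hw, Pi.div_apply,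
          mul_div_mul_left _ _ (sub_ne_zero.2 hzw)]
    · refine ((hf w).div (hg w) hw).congr_of_eventuallyEq ?_
      filter_upwards [hg.continuous.continuousAt.eventually_ne hw] with z hz
      simp [hz]
  · by_cases hz : g z = 0
    · simp [hz, (hsimple z hz).1]
    · simp [hz]

theorem dense_setOf_ne_zero (hg : Differentiable ℂ g) (hsimple : ∀ w, g w = 0 → deriv g w ≠ 0) :
    Dense {z | g z ≠ 0} := by
  intro w
  by_cases hw : g w = 0
  · exact mem_closure_iff_frequently.2
      ((((hg w).hasDerivAt.eventually_ne (hsimple w hw)).frequently).filter_mono nhdsWithin_le_nhds)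
  · exact subset_closure hw

theorem exists_eq_const_mul_of_periodic (Λ : Submodule ℤ ℂ) [DiscreteTopology Λ] [IsZLattice ℝ Λ]
    (hf : Differentiable ℂ f) (hg : Differentiable ℂ g)
    (hsimple : ∀ w, g w = 0 → f w = 0 ∧ deriv g w ≠ 0) {φ ψ : ℂ → ℝ} (hφ : Continuous φ)
    (hψ : Continuous ψ) (hψ_pos : ∀ z, 0 < ψ z) (hψφ : ∀ z, ψ z ≤ φ z)
    (hfper : ∀ z, ∀ w ∈ Λ, ‖f (z + w)‖ * φ (z + w) = ‖f z‖ * φ z)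
    (hgper : ∀ z, ∀ w ∈ Λ, ‖g (z + w)‖ * ψ (z + w) = ‖g z‖ * ψ z) :
    ∃ C, ∀ z, f z = C * g z := by
  obtain ⟨q, hq, hfq⟩ := exists_differentiable_eq_mul hf hg hsimple
  set Q : ℂ → ℝ := fun z => ‖q z‖ * (φ z / ψ z) with hQ_def
  have hQ : Continuous Q := by
    have := hq.continuous
    have := fun z => (hψ_pos z).ne'
    fun_prop (disch := assumption)
  have hQ_eq (z : ℂ) (hz : g z ≠ 0) : Q z = ‖f z‖ * φ z / (‖g z‖ * ψ z) := by
    rw [hfq, norm_mul]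
    have := norm_ne_zero_iff.2 hz
    have := (hψ_pos z).ne'
    simp only [hQ_def]
    field_simp
  have hQ_per (z w : ℂ) (hw : w ∈ Λ) : Q (z + w) = Q z := by
    refine congrFun (Continuous.ext_on (f := fun z => Q (z + w))
      (dense_setOf_ne_zero hg fun w hw => (hsimple w hw).2) (by fun_prop) hQ fun x hx => ?_) z
    have hxw : g (x + w) ≠ 0 := by
      intro h0
      have := hgper x w hw
      rw [h0, norm_zero, zero_mul, zero_eq_mul, norm_eq_zero] at this
      exact this.elim hx (hψ_pos x).ne'
    simp only [hQ_eq _ hx, hQ_eq _ hxw, hfper x w hw, hgper x w hw]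
  obtain ⟨B, hB⟩ := (IsZLattice.isCompact_range_of_periodic Λ Q hQ hQ_per).bddAbove
  have hq_bdd : Bornology.IsBounded (Set.range q) := by
    refine isBounded_iff_forall_norm_le.2 ⟨B, ?_⟩
    rintro _ ⟨z, rfl⟩
    refine le_trans ?_ (hB ⟨z, rfl⟩)
    exact le_mul_of_one_le_right (norm_nonneg _) ((one_le_div (hψ_pos z)).2 (hψφ z))
  exact ⟨q 0, fun z => by rw [hfq, hq.apply_eq_apply_of_bounded hq_bdd z 0]⟩

end EntireFunctions

section ExpLinearPeriods

/-- The translations under which `f` changes by a factor `exp (a z + b)`, such as the periods of a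
theta function. -/
def expLinearPeriods (f : ℂ → ℂ) : AddSubgroup ℂ where
  carrier := {w | ∃ a b : ℂ, ∀ z, f (z + w) = Complex.exp (a * z + b) * f z}
  zero_mem' := ⟨0, 0, by simp⟩
  add_mem' := by
    rintro v w ⟨a, b, hv⟩ ⟨a', b', hw⟩
    refine ⟨a + a', a' * v + b + b', fun z => ?_⟩
    rw [← add_assoc, hw, hv, ← mul_assoc, ← Complex.exp_add]
    ring_nf
  neg_mem' := by
    rintro w ⟨a, b, hw⟩
    refine ⟨-a, a * w - b, fun z => ?_⟩
    rw [← neg_add_cancel_right z w, hw, neg_add_cancel_right, ← mul_assoc, ← Complex.exp_add]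
    ring_nf
    simp

variable {f : ℂ → ℂ} {w : ℂ}

theorem apply_eq_zero_of_mem_expLinearPeriods (hw : w ∈ expLinearPeriods f) (h0 : f 0 = 0) :
    f w = 0 := by
  obtain ⟨a, b, h⟩ := hw
  simpa [h0] using h 0

theorem deriv_ne_zero_of_mem_expLinearPeriods (hf : DifferentiableAt ℂ f 0)
    (hw : w ∈ expLinearPeriods f) (h0 : f 0 = 0) (h0' : deriv f 0 ≠ 0) : deriv f w ≠ 0 := by
  obtain ⟨a, b, h⟩ := hw
  have hderiv : deriv (fun z => f (z + w)) 0 = Complex.exp b * deriv f 0 := by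
    rw [funext h, deriv_fun_mul (by fun_prop) hf]
    simp [h0]
  rw [deriv_comp_add_const, zero_add] at hderiv
  simp [hderiv, h0']

end ExpLinearPeriods

section LogNorm

theorem integrableAtFilter_log_norm_sub {E : Type*} [NormedAddCommGroup E] [NormedSpace ℝ E]
    [FiniteDimensional ℝ E] [MeasurableSpace E] [BorelSpace E] (μ : Measure E) [μ.IsAddHaarMeasure]
    (hE : 1 < Module.finrank ℝ E) (x₀ : E) :
    IntegrableAtFilter (fun x => Real.log ‖x - x₀‖) (𝓝 x₀) μ := by
  have : Nontrivial E := Module.nontrivial_of_finrank_pos (R := ℝ) (zero_lt_one.trans hE)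
  have hball : IntegrableOn (fun x : E => Real.log ‖x‖) (Metric.ball 0 1) μ := by
    refine integrableOn_ball_of_norm_le_rpow (C := 1) (α := 1) hE.le (by exact_mod_cast hE) ?_
      (Real.measurable_log.comp measurable_norm).aestronglyMeasurable
    filter_upwards [ae_restrict_mem Metric.isOpen_ball.measurableSet,
      ae_restrict_of_ae (Measure.ae_ne μ 0)] with x hx hx0
    have hpos : 0 < ‖x‖ := norm_pos_iff.2 hx0
    have hlog := Real.abs_log_mul_self_lt ‖x‖ hpos (mem_ball_zero_iff.1 hx).le
    rw [abs_mul, abs_norm] at hlog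
    rw [Real.norm_eq_abs, Real.rpow_neg_one, one_mul, ← one_div, le_div_iff₀ hpos]
    exact hlog.le
  refine ⟨Metric.ball x₀ 1, Metric.ball_mem_nhds _ one_pos, ?_⟩
  have hpre : (fun x => x - x₀) ⁻¹' Metric.ball 0 1 = Metric.ball x₀ 1 := by
    ext x
    simp [dist_eq_norm]
  rw [← hpre]
  exact ((measurePreserving_sub_right μ x₀).integrableOn_comp_preimage
    (MeasurableEquiv.subRight x₀).measurableEmbedding).2 hball

theorem integrableAtFilter_log_norm {f : ℂ → ℂ} {z₀ : ℂ} (hf : AnalyticAt ℂ f z₀)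
    (hf0 : ¬ ∀ᶠ z in 𝓝 z₀, f z = 0) :
    IntegrableAtFilter (fun z => Real.log ‖f z‖) (𝓝 z₀) := by
  obtain ⟨n, g, hg, hg0, hfg⟩ := hf.exists_eventuallyEq_pow_smul_nonzero_iff.2 hf0
  have hlog_pow : IntegrableAtFilter (fun z : ℂ => (n : ℝ) * Real.log ‖z - z₀‖) (𝓝 z₀) :=
    (integrableAtFilter_log_norm_sub volume (by simp [Complex.finrank_real_complex]) z₀).smul
      (n : ℝ)
  have hg_cont : ∀ᶠ z in 𝓝 z₀, ContinuousAt g z ∧ g z ≠ 0 :=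
    (hg.eventually_analyticAt.mono fun z hz => hz.continuousAt).and
      (hg.continuousAt.eventually_ne hg0)
  obtain ⟨t, ht, ht_open, hz₀t⟩ := eventually_nhds_iff.1 (hfg.and hg_cont)
  have hlog_g : ContinuousOn (fun z => Real.log ‖g z‖) t := fun z hz =>
    ((ht z hz).2.1.norm.log (norm_ne_zero_iff.2 (ht z hz).2.2)).continuousWithinAt
  have hlog_g_int : IntegrableAtFilter (fun z => Real.log ‖g z‖) (𝓝 z₀) :=
    (volume.finiteAt_nhds z₀).integrableAtFilter_of_tendsto
      (hlog_g.stronglyMeasurableAtFilter ht_open z₀ hz₀t)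
      (hlog_g.continuousAt (ht_open.mem_nhds hz₀t))
  obtain ⟨s, hs, hint⟩ := hlog_pow.add hlog_g_int
  refine ⟨s ∩ t, inter_mem hs (ht_open.mem_nhds hz₀t),
    (hint.mono_set Set.inter_subset_left).congr_fun_ae ?_⟩
  filter_upwards [ae_mono (Measure.restrict_mono_set volume Set.inter_subset_right)
    (ae_restrict_mem ht_open.measurableSet), ae_restrict_of_ae (Measure.ae_ne volume z₀)]
    with z hzt hz
  obtain ⟨hfz, -, hgz⟩ := ht z hzt
  rw [hfz, norm_smul, norm_pow, Real.log_mul (pow_ne_zero _ (norm_ne_zero_iff.2 (sub_ne_zero.2 hz)))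
    (norm_ne_zero_iff.2 hgz), Real.log_pow, Pi.add_apply]

end LogNorm

section SigmaProduct

theorem norm_one_sub_mul_exp_sub_one_le (x : ℂ) :
    ‖(1 - x) * Complex.exp (x + x ^ 2 / 2) - 1‖ ≤ Real.exp (‖x‖ + ‖x‖ ^ 2 / 2) * ‖x‖ ^ 3 := by
  have hderiv (y : ℂ) : HasDerivAt (fun y : ℂ => (1 - y) * Complex.exp (y + y ^ 2 / 2))
      (-(y ^ 2) * Complex.exp (y + y ^ 2 / 2)) y := by
    convert! ((hasDerivAt_id y).const_sub 1).mul
      ((hasDerivAt_id y).add (((hasDerivAt_id y).pow 2).div_const 2)).cexp using 1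
    simp only [neg_mul, Pi.pow_apply, id_eq, Pi.add_apply, one_mul, Nat.cast_ofNat,
      Nat.add_one_sub_one, pow_one, mul_one, ne_eq, OfNat.ofNat_ne_zero, not_false_eq_true,
      mul_div_cancel_left₀]
    ring
  have hbound : ∀ y ∈ Metric.closedBall (0 : ℂ) ‖x‖,
      ‖-(y ^ 2) * Complex.exp (y + y ^ 2 / 2)‖ ≤ Real.exp (‖x‖ + ‖x‖ ^ 2 / 2) * ‖x‖ ^ 2 := by
    intro y hy
    have hyx : ‖y‖ ≤ ‖x‖ := by simpa using hy
    have hexponent : ‖y + y ^ 2 / 2‖ ≤ ‖x‖ + ‖x‖ ^ 2 / 2 := by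
      refine (norm_add_le _ _).trans ?_
      rw [norm_div, norm_pow, Complex.norm_ofNat]
      gcongr
    have hexp := (Complex.norm_exp_le_exp_norm _).trans (Real.exp_le_exp.2 hexponent)
    rw [norm_mul, norm_neg, norm_pow, mul_comm]
    gcongr
  have hmvt := (convex_closedBall (0 : ℂ) ‖x‖).norm_image_sub_le_of_norm_hasDerivWithin_le
    (fun y _ => (hderiv y).hasDerivWithinAt) hbound (x := 0) (y := x) (by simp) (by simp)
  simpa [pow_succ, mul_assoc] using hmvt

/-- The factor of the Weierstrass product for `σ` attached to the lattice point `l`. For `l = 0` it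
is `1`, because `z / 0 = 0`, so the product can be taken over the whole lattice. -/
noncomputable def sigmaFactor (l z : ℂ) : ℂ :=
  (1 - z / l) * Complex.exp (z / l + z ^ 2 / (2 * l ^ 2))

theorem sigmaFactor_zero_left (z : ℂ) : sigmaFactor 0 z = 1 := by simp [sigmaFactor]

theorem differentiable_sigmaFactor (l : ℂ) : Differentiable ℂ (sigmaFactor l) := by
  unfold sigmaFactor
  fun_prop

theorem sigmaFactor_ne_zero {l z : ℂ} (h : l = 0 ∨ z ≠ l) : sigmaFactor l z ≠ 0 := by
  rcases eq_or_ne l 0 with rfl | hl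
  · simp [sigmaFactor_zero_left]
  · have hzl : z ≠ l := h.resolve_left hl
    refine mul_ne_zero (fun h0 => hzl ?_) (Complex.exp_ne_zero _)
    exact ((div_eq_one_iff_eq hl).1 (sub_eq_zero.1 h0).symm)

theorem norm_sigmaFactor_sub_one_le (l z : ℂ) :
    ‖sigmaFactor l z - 1‖ ≤ Real.exp (‖z / l‖ + ‖z / l‖ ^ 2 / 2) * ‖z / l‖ ^ 3 := by
  have h : sigmaFactor l z = (1 - z / l) * Complex.exp (z / l + (z / l) ^ 2 / 2) := by
    rw [sigmaFactor, div_pow, div_div, mul_comm (l ^ 2)]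
  rw [h]
  exact norm_one_sub_mul_exp_sub_one_le _

variable (L : PeriodPair)

theorem summable_norm_inv_pow_three : Summable fun l : L.lattice => ‖(l : ℂ)⁻¹‖ ^ 3 := by
  simpa using (L.hasSum_sumInvPow 0 (r := 3) (by norm_num)).summable.norm

theorem eventually_norm_sigmaFactor_sub_one_le (r : ℝ) :
    ∀ᶠ l : L.lattice in cofinite, ∀ z ∈ Metric.ball (0 : ℂ) r,
      ‖sigmaFactor l z - 1‖ ≤ Real.exp (r + r ^ 2 / 2) * r ^ 3 * ‖(l : ℂ)⁻¹‖ ^ 3 := by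
  filter_upwards [(summable_norm_inv_pow_three L).tendsto_cofinite_zero.eventually
    (gt_mem_nhds one_pos)] with l hl z hz
  have hl1 : ‖(l : ℂ)⁻¹‖ ≤ 1 := ((pow_lt_one_iff_of_nonneg (norm_nonneg _) three_ne_zero).1 hl).le
  have hzr : ‖z‖ ≤ r := (mem_ball_zero_iff.1 hz).le
  have hzl : ‖z / l‖ ≤ r * ‖(l : ℂ)⁻¹‖ := by
    rw [div_eq_mul_inv, norm_mul]
    gcongr
  have hzl' : ‖z / l‖ ≤ r :=
    hzl.trans (mul_le_of_le_one_right ((norm_nonneg z).trans hzr) hl1)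
  calc ‖sigmaFactor l z - 1‖ ≤ Real.exp (‖z / l‖ + ‖z / l‖ ^ 2 / 2) * ‖z / l‖ ^ 3 :=
        norm_sigmaFactor_sub_one_le _ _
    _ ≤ Real.exp (r + r ^ 2 / 2) * (r * ‖(l : ℂ)⁻¹‖) ^ 3 := by gcongr
    _ = Real.exp (r + r ^ 2 / 2) * r ^ 3 * ‖(l : ℂ)⁻¹‖ ^ 3 := by ring

/-- The entire function `σ(z) / z` as a product over all lattice points. -/
noncomputable def sigmaProd (z : ℂ) : ℂ := ∏' l : L.lattice, sigmaFactor l z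

theorem hasProdLocallyUniformlyOn_sigmaProd :
    HasProdLocallyUniformlyOn (fun l : L.lattice => sigmaFactor l) (sigmaProd L) Set.univ := by
  have hball (r : ℝ) : HasProdLocallyUniformlyOn (fun l : L.lattice => sigmaFactor l)
      (sigmaProd L) (Metric.ball 0 r) := by
    have h := Summable.hasProdLocallyUniformlyOn_one_add
      (f := fun (l : L.lattice) z => sigmaFactor l z - 1) Metric.isOpen_ball
      ((summable_norm_inv_pow_three L).mul_left _) (eventually_norm_sigmaFactor_sub_one_le L r)
      fun l => ((differentiable_sigmaFactor l).continuous.sub continuous_const).continuousOn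
    simp only [add_sub_cancel] at h
    exact h
  rw [hasProdLocallyUniformlyOn_iff_tendstoLocallyUniformlyOn]
  intro u hu z _
  have hz : z ∈ Metric.ball (0 : ℂ) (‖z‖ + 1) := by simp
  have h := hasProdLocallyUniformlyOn_iff_tendstoLocallyUniformlyOn.1 (hball (‖z‖ + 1)) u hu z hz
  rwa [Metric.isOpen_ball.nhdsWithin_eq hz, ← nhdsWithin_univ] at h

theorem differentiable_sigmaProd : Differentiable ℂ (sigmaProd L) := by
  rw [← differentiableOn_univ]
  refine (hasProdLocallyUniformlyOn_iff_tendstoLocallyUniformlyOn.1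
    (hasProdLocallyUniformlyOn_sigmaProd L)).differentiableOn
    (Eventually.of_forall fun s => ?_) isOpen_univ
  have (l : L.lattice) := differentiable_sigmaFactor l
  fun_prop

theorem sigmaProd_zero : sigmaProd L 0 = 1 := by simp [sigmaProd, sigmaFactor]

theorem sigmaProd_ne_zero {z : ℂ} (hz : z ∉ L.lattice) : sigmaProd L z ≠ 0 := by
  have hsummable : Summable fun l : L.lattice => ‖sigmaFactor l z - 1‖ := by
    refine Summable.of_norm_bounded_eventually
      (g := fun l => Real.exp (‖z‖ + 1 + (‖z‖ + 1) ^ 2 / 2) * (‖z‖ + 1) ^ 3 * ‖(l : ℂ)⁻¹‖ ^ 3)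
      ((summable_norm_inv_pow_three L).mul_left _) ?_
    filter_upwards [eventually_norm_sigmaFactor_sub_one_le L (‖z‖ + 1)] with l hl
    simpa using hl z (by simp)
  have h := tprod_one_add_ne_zero_of_summable (f := fun l : L.lattice => sigmaFactor l z - 1)
    (fun l => ?_) hsummable
  · simp only [add_sub_cancel] at h
    exact h
  · rw [add_sub_cancel]
    exact sigmaFactor_ne_zero (Or.inr fun h => hz (h ▸ l.2))

theorem sigmaProd_eq_zero {w : ℂ} (hw : w ∈ L.lattice) (hw0 : w ≠ 0) : sigmaProd L w = 0 :=
  ((hasProdLocallyUniformlyOn_sigmaProd L).hasProd (Set.mem_univ w)).unique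
    (hasProd_zero_of_exists_eq_zero ⟨⟨w, hw⟩, by simp [sigmaFactor, hw0]⟩)

theorem sigmaProd_neg (z : ℂ) : sigmaProd L (-z) = sigmaProd L z := by
  unfold sigmaProd
  rw [← (Equiv.neg L.lattice).tprod_eq]
  simp [sigmaFactor]

theorem wSigma_eq_mul_sigmaProd (z : ℂ) : σ[L] z = z * sigmaProd L z := by
  have hsupp : Function.mulSupport (fun p : ℤ × ℤ => sigmaFactor (p.1 * L.ω₁ + p.2 * L.ω₂) z) ⊆
      {p | p ≠ 0} := by
    rintro p hp rfl
    exact hp (by simp [sigmaFactor_zero_left])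
  have hreindex (p : ℤ × ℤ) : ((L.latticeEquivProd.symm p : L.lattice) : ℂ) =
      p.1 * L.ω₁ + p.2 * L.ω₂ := L.latticeEquiv_symm_apply p
  rw [sigmaProd, ← L.latticeEquivProd.symm.toEquiv.tprod_eq]
  simp only [LinearEquiv.coe_toEquiv, hreindex]
  rw [← tprod_subtype_eq_of_mulSupport_subset hsupp]
  rfl

theorem differentiable_wSigma : Differentiable ℂ σ[L] := by
  rw [funext (wSigma_eq_mul_sigmaProd L)]
  exact differentiable_id.mul (differentiable_sigmaProd L)

theorem wSigma_zero : σ[L] 0 = 0 := by rw [wSigma_eq_mul_sigmaProd, zero_mul]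

theorem wSigma_eq_zero_iff {z : ℂ} : σ[L] z = 0 ↔ z ∈ L.lattice := by
  rw [wSigma_eq_mul_sigmaProd, mul_eq_zero]
  refine ⟨fun h => ?_, fun hz => or_iff_not_imp_left.2 (sigmaProd_eq_zero L hz)⟩
  by_contra hz
  exact h.elim (fun h0 => hz (h0 ▸ L.lattice.zero_mem)) (sigmaProd_ne_zero L hz)

theorem deriv_wSigma_zero : deriv σ[L] 0 = 1 := by
  have h := (hasDerivAt_id (0 : ℂ)).fun_mul ((differentiable_sigmaProd L) 0).hasDerivAt
  rw [funext (wSigma_eq_mul_sigmaProd L)]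
  simpa [sigmaProd_zero] using h.deriv

theorem wSigma_neg (z : ℂ) : σ[L] (-z) = -σ[L] z := by
  simp only [wSigma_eq_mul_sigmaProd, sigmaProd_neg, neg_mul]

end SigmaProduct

section Zeta

/-- The term of the partial fraction expansion of `ζ` at `l`, equal to `1 / z` for `l = 0` since
division by zero gives zero. -/
noncomputable def zetaSummand (l z : ℂ) : ℂ := 1 / (z - l) + 1 / l + z / l ^ 2

theorem logDeriv_exp_mul {f g : ℂ → ℂ} {g' x : ℂ} (hg : HasDerivAt g g' x)
    (hf : DifferentiableAt ℂ f x) (hfx : f x ≠ 0) :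
    logDeriv (fun z => Complex.exp (g z) * f z) x = g' + logDeriv f x := by
  rw [logDeriv_mul (f := fun z => Complex.exp (g z)) x (Complex.exp_ne_zero _) hfx
    hg.cexp.differentiableAt hf, logDeriv_apply, hg.cexp.deriv,
    mul_div_cancel_left₀ _ (Complex.exp_ne_zero _)]

theorem logDeriv_sigmaFactor {l z : ℂ} (hl : l ≠ 0) (hz : z ≠ l) :
    logDeriv (sigmaFactor l) z = zetaSummand l z := by
  have hzl : z - l ≠ 0 := sub_ne_zero.2 hz
  have hlin : HasDerivAt (fun z : ℂ => 1 - z / l) (-(1 / l)) z :=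
    ((hasDerivAt_id z).div_const l).const_sub 1
  have hquad : HasDerivAt (fun z : ℂ => z / l + z ^ 2 / (2 * l ^ 2)) (1 / l + z / l ^ 2) z := by
    convert! ((hasDerivAt_id z).div_const l).add
      (((hasDerivAt_id z).pow 2).div_const (2 * l ^ 2)) using 1
    simp only [one_div, Nat.cast_ofNat, id_eq, Nat.add_one_sub_one, pow_one, mul_one,
      add_right_inj]
    field_simp
  have hlin0 : 1 - z / l ≠ 0 := by
    rw [one_sub_div hl]
    exact div_ne_zero (sub_ne_zero.2 hz.symm) hl
  have hfactor : sigmaFactor l = fun z =>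
      Complex.exp (z / l + z ^ 2 / (2 * l ^ 2)) * (1 - z / l) := funext fun _ => mul_comm _ _
  rw [hfactor, logDeriv_exp_mul hquad hlin.differentiableAt hlin0, logDeriv_apply, hlin.deriv,
    one_sub_div hl, ← neg_sub z l, zetaSummand]
  field_simp
  ring

theorem hasDerivAt_zetaSummand {l z : ℂ} (hz : z ≠ l) :
    HasDerivAt (zetaSummand l) (-(1 / (z - l) ^ 2 - 1 / l ^ 2)) z := by
  convert! ((((hasDerivAt_id z).sub_const l).inv (sub_ne_zero.2 hz)).add_const (1 / l)).add
    ((hasDerivAt_id z).div_const (l ^ 2)) using 1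
  · funext z
    simp [zetaSummand]
  · simp only [id_eq]
    ring

variable {L : PeriodPair}

theorem wZeta_eq_add_logDeriv_sigmaProd {z : ℂ} (hz : z ∉ L.lattice) :
    ζ[L] z = 1 / z + logDeriv (sigmaProd L) z := by
  have h0 : z ≠ 0 := fun h => hz (h ▸ L.lattice.zero_mem)
  have h := logDeriv_mul z h0 (sigmaProd_ne_zero L hz) differentiableAt_fun_id
    (differentiable_sigmaProd L z)
  rwa [← funext (wSigma_eq_mul_sigmaProd L), logDeriv_id'] at h

theorem hasSum_zetaSummand {z : ℂ} (hz : z ∉ L.lattice) :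
    HasSum (fun l : L.lattice => zetaSummand l z) (ζ[L] z) := by
  have hzl (l : L.lattice) : z ≠ l := fun h => hz (h ▸ l.2)
  have hlog : HasSum (fun l : L.lattice => logDeriv (sigmaFactor l) z)
      (logDeriv (sigmaProd L) z) := by
    refine (Complex.logDeriv_tendsto isOpen_univ (Set.mem_univ z)
      (hasProdLocallyUniformlyOn_iff_tendstoLocallyUniformlyOn.1
        (hasProdLocallyUniformlyOn_sigmaProd L)) (Eventually.of_forall fun s => ?_)
      (sigmaProd_ne_zero L hz)).congr fun s => ?_
    · have (l : L.lattice) := differentiable_sigmaFactor l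
      fun_prop
    · exact logDeriv_prod (fun l _ => sigmaFactor_ne_zero (Or.inr (hzl l)))
        fun l _ => differentiable_sigmaFactor l z
  have hterm (l : L.lattice) : zetaSummand l z =
      (if l = 0 then 1 / z else 0) + logDeriv (sigmaFactor l) z := by
    split_ifs with hl
    · subst hl
      have hone : sigmaFactor 0 = fun _ => 1 := funext sigmaFactor_zero_left
      simp [zetaSummand, hone]
    · rw [logDeriv_sigmaFactor (by simpa using hl) (hzl l), zero_add]
  rw [wZeta_eq_add_logDeriv_sigmaProd hz, funext hterm]
  exact (hasSum_ite_eq 0 (1 / z)).add hlog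

theorem hasDerivAt_wZeta {z : ℂ} (hz : z ∉ L.lattice) :
    HasDerivAt ζ[L] (-L.weierstrassP z) z := by
  have hP := hasSumLocallyUniformlyOn_iff_tendstoLocallyUniformlyOn.1
    (L.hasSumLocallyUniformly_weierstrassP.hasSumLocallyUniformlyOn (s := (L.lattice : Set ℂ)ᶜ))
  refine hasDerivAt_of_tendstoLocallyUniformlyOn
    (f := fun (s : Finset L.lattice) z => ∑ l ∈ s, zetaSummand l z) L.isClosed_lattice.isOpen_compl
    hP.neg (Eventually.of_forall fun s x hx => ?_) (fun x hx => hasSum_zetaSummand hx) hz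
  have hxl (l : L.lattice) : x ≠ l := fun h => hx (h ▸ l.2)
  have h := HasDerivAt.fun_sum fun (l : L.lattice) (_ : l ∈ s) => hasDerivAt_zetaSummand (hxl l)
  rw [Finset.sum_neg_distrib] at h
  exact h

variable (L) in
theorem wZeta_neg (z : ℂ) : ζ[L] (-z) = -ζ[L] z := by
  have hderiv : deriv σ[L] (-z) = deriv σ[L] z := by
    have h := deriv_comp_neg σ[L] z
    rw [funext (wSigma_neg L), deriv.fun_neg] at h
    exact (neg_injective h).symm
  rw [wZeta, wZeta, hderiv, wSigma_neg, div_neg]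

end Zeta

section QuasiPeriodicity

variable {L : PeriodPair} {w : ℂ}

theorem isPreconnected_compl_lattice (L : PeriodPair) : IsPreconnected (L.lattice : Set ℂ)ᶜ := by
  have : Countable L.lattice := L.latticeEquivProd.toEquiv.countable_iff.2 inferInstance
  exact ((Set.to_countable _).isPathConnected_compl_of_one_lt_rank
    (by simp)).isConnected.isPreconnected

theorem wZeta_add_sub_wZeta (hw : w ∈ L.lattice) (hw2 : w / 2 ∉ L.lattice) {z : ℂ}
    (hz : z ∉ L.lattice) : ζ[L] (z + w) - ζ[L] z = 2 * ζ[L] (w / 2) := by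
  have hderiv {x : ℂ} (hx : x ∉ L.lattice) :
      HasDerivAt (fun z => ζ[L] (z + w) - ζ[L] z) 0 x := by
    have hxw : x + w ∉ L.lattice := by rwa [Submodule.add_mem_iff_left _ hw]
    have h := ((hasDerivAt_wZeta hxw).comp_add_const x w).fun_sub (hasDerivAt_wZeta hx)
    rwa [L.weierstrassP_add_coe x ⟨w, hw⟩, sub_self] at h
  have hneg : -(w / 2) ∉ L.lattice := by simpa using hw2
  have hconst := L.isClosed_lattice.isOpen_compl.is_const_of_deriv_eq_zero
    (isPreconnected_compl_lattice L)
    (fun x hx => (hderiv hx).differentiableAt.differentiableWithinAt)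
    (fun x hx => (hderiv hx).deriv) hz hneg
  rw [hconst, wZeta_neg, neg_add_eq_sub, sub_half]
  ring

theorem wSigma_add (hw : w ∈ L.lattice) (hw2 : w / 2 ∉ L.lattice) (z : ℂ) :
    σ[L] (z + w) = -Complex.exp (2 * ζ[L] (w / 2) * (z + w / 2)) * σ[L] z := by
  set η := 2 * ζ[L] (w / 2) with hη
  have hσ := differentiable_wSigma L
  have hσ0 {x : ℂ} (hx : x ∉ L.lattice) : σ[L] x ≠ 0 := fun h => hx ((wSigma_eq_zero_iff L).1 h)
  have hexponent (x : ℂ) : HasDerivAt (fun z => η * (z + w / 2)) η x := by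
    simpa using ((hasDerivAt_id' x).add_const (w / 2)).const_mul η
  have hlog : Set.EqOn (logDeriv fun z => σ[L] (z + w))
      (logDeriv fun z => Complex.exp (η * (z + w / 2)) * σ[L] z) (L.lattice : Set ℂ)ᶜ := by
    intro x hx
    have hshift : logDeriv (fun z => σ[L] (z + w)) x = ζ[L] (x + w) := by
      rw [logDeriv_apply, deriv_comp_add_const, wZeta]
    rw [hshift, logDeriv_exp_mul (hexponent x) (hσ x) (hσ0 hx), hη, ← wZeta_add_sub_wZeta hw hw2 hx]
    exact (sub_add_cancel _ _).symm
  obtain ⟨C, -, hC⟩ := (logDeriv_eqOn_iff (by fun_prop) (by fun_prop)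
    L.isClosed_lattice.isOpen_compl (isPreconnected_compl_lattice L)
    (fun x hx => mul_ne_zero (Complex.exp_ne_zero _) (hσ0 hx))
    (fun x hx => hσ0 (by rwa [Submodule.add_mem_iff_left _ hw]))).1 hlog
  have hC1 : C = -1 := by
    have h := hC (show -(w / 2) ∉ L.lattice by simpa using hw2)
    simp only [Pi.smul_apply, smul_eq_mul, neg_add_eq_sub, sub_half, sub_self, mul_zero,
      Complex.exp_zero, one_mul, wSigma_neg] at h
    refine mul_right_cancel₀ (hσ0 hw2) ?_
    linear_combination h
  by_cases hz : z ∈ L.lattice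
  · rw [(wSigma_eq_zero_iff L).2 hz, (wSigma_eq_zero_iff L).2 (L.lattice.add_mem hz hw), mul_zero]
  · simpa [hC1] using hC hz

theorem mem_expLinearPeriods_wSigma (hw : w ∈ L.lattice) (hw2 : w / 2 ∉ L.lattice) :
    w ∈ expLinearPeriods σ[L] := by
  refine ⟨2 * ζ[L] (w / 2), 2 * ζ[L] (w / 2) * (w / 2) + Real.pi * Complex.I, fun z => ?_⟩
  rw [wSigma_add hw hw2, ← Complex.exp_add_pi_mul_I]
  ring_nf

theorem lattice_le_of_mem (L : PeriodPair) {H : AddSubgroup ℂ} (h₁ : L.ω₁ ∈ H) (h₂ : L.ω₂ ∈ H) :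
    L.lattice.toAddSubgroup ≤ H := by
  rw [PeriodPair.lattice, Submodule.span_int_eq_addSubgroupClosure]
  refine (AddSubgroup.closure_le _).2 ?_
  exact Set.pair_subset h₁ h₂

theorem lattice_le_expLinearPeriods_wSigma (L : PeriodPair) :
    L.lattice.toAddSubgroup ≤ expLinearPeriods σ[L] :=
  lattice_le_of_mem L (mem_expLinearPeriods_wSigma L.ω₁_mem_lattice L.ω₁_div_two_notMem_lattice)
    (mem_expLinearPeriods_wSigma L.ω₂_mem_lattice L.ω₂_div_two_notMem_lattice)

end QuasiPeriodicity

section JacobiTheta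

variable {τ : ℂ}

theorem jacobiTheta₂_half_add_half (τ : ℂ) : jacobiTheta₂ (1 / 2 + τ / 2) τ = 0 := by
  have hshift := jacobiTheta₂_add_left' (1 / 2 - τ / 2) τ
  have heven : jacobiTheta₂ (1 / 2 - τ / 2) τ = jacobiTheta₂ (1 / 2 + τ / 2) τ := by
    rw [← jacobiTheta₂_neg_left, ← jacobiTheta₂_add_left]
    ring_nf
  have hexponent : -Real.pi * Complex.I * (τ + 2 * (1 / 2 - τ / 2)) = -(Real.pi * Complex.I) := by
    ring
  rw [heven, hexponent, Complex.exp_neg_pi_mul_I,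
    show 1 / 2 - τ / 2 + τ = 1 / 2 + τ / 2 by ring] at hshift
  exact self_eq_neg.1 (by linear_combination hshift)

theorem integral_jacobiTheta₂_term (n : ℤ) (τ : ℂ) :
    ∫ x in (0 : ℝ)..1, jacobiTheta₂_term n x τ = if n = 0 then 1 else 0 := by
  split_ifs with hn
  · simp [hn, jacobiTheta₂_term]
  · have hn0 : 2 * Real.pi * Complex.I * n ≠ 0 :=
      mul_ne_zero Complex.two_pi_I_ne_zero (Int.cast_ne_zero.2 hn)
    have hone : Complex.exp (2 * Real.pi * Complex.I * n * (1 : ℝ)) = 1 :=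
      Complex.exp_eq_one_iff.2 ⟨n, by push_cast; ring⟩
    simp only [jacobiTheta₂_term, Complex.exp_add]
    rw [intervalIntegral.integral_mul_const, integral_exp_mul_complex hn0, hone]
    simp

theorem integral_jacobiTheta₂ (hτ : 0 < τ.im) :
    ∫ x in (0 : ℝ)..1, jacobiTheta₂ x τ = 1 := by
  have hsum := intervalIntegral.hasSum_integral_of_dominated_convergence (a := 0) (b := 1)
    (μ := volume) (F := fun n (x : ℝ) => jacobiTheta₂_term n x τ)
    (f := fun x : ℝ => jacobiTheta₂ x τ) (fun n _ => ‖jacobiTheta₂_term n 0 τ‖)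
    (fun n => Continuous.aestronglyMeasurable (by unfold jacobiTheta₂_term; fun_prop))
    (fun n => Eventually.of_forall fun x _ => by simp [norm_jacobiTheta₂_term])
    (Eventually.of_forall fun x _ => ((summable_jacobiTheta₂_term_iff 0 τ).2 hτ).norm) (by simp)
    (Eventually.of_forall fun x _ => hasSum_jacobiTheta₂_term x hτ)
  simp only [integral_jacobiTheta₂_term] at hsum
  exact hsum.unique (hasSum_ite_eq 0 1)

theorem exists_jacobiTheta₂_ne_zero (hτ : 0 < τ.im) : ∃ z, jacobiTheta₂ z τ ≠ 0 := by
  by_contra! h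
  simpa [h] using integral_jacobiTheta₂ hτ

end JacobiTheta

section ThetaDegree

/-- `f` behaves under translation by the periods of `L` like a theta function of degree `k`, up to
factors of modulus one; the periods are normalized so that translation by `ω₁` preserves `‖f‖`.
The degree counts the zeros of `f` in a period parallelogram. -/
structure HasThetaDegree (L : PeriodPair) (f : ℂ → ℂ) (k : ℝ) : Prop where
  differentiable : Differentiable ℂ f
  norm_add_ω₁ (z : ℂ) : ‖f (z + L.ω₁)‖ = ‖f z‖
  norm_add_ω₂ (z : ℂ) :
    ‖f (z + L.ω₂)‖ = Real.exp (2 * Real.pi * k * ((z + L.ω₂ / 2) / L.ω₁).im) * ‖f z‖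

variable {L : PeriodPair} {f g : ℂ → ℂ} {k m n : ℝ}

theorem HasThetaDegree.one (L : PeriodPair) : HasThetaDegree L (fun _ => 1) 0 where
  differentiable := differentiable_const 1
  norm_add_ω₁ _ := rfl
  norm_add_ω₂ z := by simp

theorem ω₁_ne_zero (L : PeriodPair) : L.ω₁ ≠ 0 := by
  simpa using L.indep.ne_zero 0

theorem forall_mem_lattice_of_periodic {α : Type*} {F : ℂ → α} (h₁ : ∀ z, F (z + L.ω₁) = F z)
    (h₂ : ∀ z, F (z + L.ω₂) = F z) (z : ℂ) {w : ℂ} (hw : w ∈ L.lattice) : F (z + w) = F z := by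
  let periods : AddSubgroup ℂ :=
    { carrier := {w | ∀ z, F (z + w) = F z}
      zero_mem' := fun z => by rw [add_zero]
      add_mem' := fun {v w} hv hw z => by rw [← add_assoc, hw, hv]
      neg_mem' := fun {w} hw z => by rw [← hw, neg_add_cancel_right] }
  exact lattice_le_of_mem L (H := periods) h₁ h₂ hw z

theorem HasThetaDegree.norm_mul_exp_add (hf : HasThetaDegree L f k) (hτ : (L.ω₂ / L.ω₁).im ≠ 0)
    (z : ℂ) {w : ℂ} (hw : w ∈ L.lattice) :
    ‖f (z + w)‖ * Real.exp (-(Real.pi * k / (L.ω₂ / L.ω₁).im * ((z + w) / L.ω₁).im ^ 2)) =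
      ‖f z‖ * Real.exp (-(Real.pi * k / (L.ω₂ / L.ω₁).im * (z / L.ω₁).im ^ 2)) := by
  refine forall_mem_lattice_of_periodic (F := fun z => ‖f z‖ *
    Real.exp (-(Real.pi * k / (L.ω₂ / L.ω₁).im * (z / L.ω₁).im ^ 2))) (fun z => ?_) (fun z => ?_)
    z hw
  · simp [hf.norm_add_ω₁, add_div, div_self (ω₁_ne_zero L)]
  · have him : ((z + L.ω₂ / 2) / L.ω₁).im = (z / L.ω₁).im + (L.ω₂ / L.ω₁).im / 2 := by
      rw [add_div, Complex.add_im, div_right_comm, Complex.div_ofNat_im]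
    rw [hf.norm_add_ω₂, mul_comm (Real.exp _), mul_assoc, ← Real.exp_add, him, add_div,
      Complex.add_im]
    congr 2
    field_simp
    ring

theorem HasThetaDegree.exists_eq_const_mul (hf : HasThetaDegree L f m) (hg : HasThetaDegree L g n)
    (hτ : 0 < (L.ω₂ / L.ω₁).im) (hmn : m ≤ n)
    (hsimple : ∀ w, g w = 0 → f w = 0 ∧ deriv g w ≠ 0) : ∃ C, ∀ z, f z = C * g z := by
  refine exists_eq_const_mul_of_periodic L.lattice hf.differentiable hg.differentiable hsimple
    (φ := fun z => Real.exp (-(Real.pi * m / (L.ω₂ / L.ω₁).im * (z / L.ω₁).im ^ 2)))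
    (ψ := fun z => Real.exp (-(Real.pi * n / (L.ω₂ / L.ω₁).im * (z / L.ω₁).im ^ 2)))
    (by fun_prop) (by fun_prop) (fun _ => Real.exp_pos _) (fun z => ?_)
    (fun z w hw => hf.norm_mul_exp_add hτ.ne' z hw) (fun z w hw => hg.norm_mul_exp_add hτ.ne' z hw)
  gcongr

theorem HasThetaDegree.degree_le (hf : HasThetaDegree L f m) (hg : HasThetaDegree L g n)
    (hτ : 0 < (L.ω₂ / L.ω₁).im) (hsimple : ∀ w, g w = 0 → f w = 0 ∧ deriv g w ≠ 0)
    (hf0 : ∃ z, f z ≠ 0) : n ≤ m := by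
  by_contra! hmn
  obtain ⟨C, hC⟩ := hf.exists_eq_const_mul hg hτ hmn.le hsimple
  have him {z : ℂ} (hz : f z ≠ 0) : ((z + L.ω₂ / 2) / L.ω₁).im = 0 := by
    have hshift := hf.norm_add_ω₂ z
    rw [hC, norm_mul, hg.norm_add_ω₂, mul_left_comm, ← norm_mul, ← hC,
      mul_left_inj' (norm_ne_zero_iff.2 hz), Real.exp_eq_exp] at hshift
    have hprod : 2 * Real.pi * (n - m) * ((z + L.ω₂ / 2) / L.ω₁).im = 0 := by
      linear_combination hshift
    exact (mul_eq_zero.1 hprod).resolve_left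
      (mul_ne_zero Real.two_pi_pos.ne' (sub_ne_zero.2 hmn.ne'))
  obtain ⟨z, hz⟩ := hf0
  have hzω : f (z + L.ω₂) ≠ 0 := by
    rw [← norm_ne_zero_iff, hf.norm_add_ω₂]
    exact mul_ne_zero (Real.exp_ne_zero _) (norm_ne_zero_iff.2 hz)
  have h := him hzω
  rw [add_right_comm, add_div, Complex.add_im, him hz, zero_add] at h
  exact hτ.ne' h

end ThetaDegree

section OddTheta

variable {L : PeriodPair}

/-- Jacobi's odd theta function for the lattice of `L`. -/
noncomputable def oddTheta (L : PeriodPair) (z : ℂ) : ℂ :=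
  Complex.exp (Real.pi * Complex.I * (z / L.ω₁)) *
    jacobiTheta₂ (z / L.ω₁ + (1 / 2 + L.ω₂ / L.ω₁ / 2)) (L.ω₂ / L.ω₁)

theorem oddTheta_zero (L : PeriodPair) : oddTheta L 0 = 0 := by
  rw [oddTheta, zero_div, zero_add, jacobiTheta₂_half_add_half, mul_zero]

theorem oddTheta_add_ω₁ (z : ℂ) :
    oddTheta L (z + L.ω₁) = Complex.exp (Real.pi * Complex.I) * oddTheta L z := by
  rw [oddTheta, oddTheta, add_div, div_self (ω₁_ne_zero L), add_right_comm,
    jacobiTheta₂_add_left, ← mul_assoc, ← Complex.exp_add]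
  ring_nf

theorem oddTheta_add_ω₂ (z : ℂ) : oddTheta L (z + L.ω₂) =
    Complex.exp (-(2 * Real.pi * Complex.I * ((z + L.ω₂ / 2) / L.ω₁)) - Real.pi * Complex.I) *
      oddTheta L z := by
  rw [oddTheta, oddTheta, add_div, add_right_comm, jacobiTheta₂_add_left', ← mul_assoc,
    ← mul_assoc, ← Complex.exp_add, ← Complex.exp_add]
  ring_nf

theorem oddTheta_eq_zero {w : ℂ} (hw : w ∈ L.lattice) : oddTheta L w = 0 := by
  refine apply_eq_zero_of_mem_expLinearPeriods (lattice_le_of_mem L ?_ ?_ hw) (oddTheta_zero L)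
  · exact ⟨0, Real.pi * Complex.I, fun z => by rw [oddTheta_add_ω₁, zero_mul, zero_add]⟩
  · refine ⟨-(2 * Real.pi * Complex.I / L.ω₁),
      -(2 * Real.pi * Complex.I * (L.ω₂ / 2 / L.ω₁)) - Real.pi * Complex.I, fun z => ?_⟩
    rw [oddTheta_add_ω₂]
    ring_nf

theorem hasThetaDegree_oddTheta (hτ : 0 < (L.ω₂ / L.ω₁).im) :
    HasThetaDegree L (oddTheta L) 1 where
  differentiable z := by
    have hθ := (differentiableAt_jacobiTheta₂_fst (z / L.ω₁ + (1 / 2 + L.ω₂ / L.ω₁ / 2)) hτ).comp z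
      (f := fun z => z / L.ω₁ + (1 / 2 + L.ω₂ / L.ω₁ / 2)) (by fun_prop)
    exact DifferentiableAt.mul (by fun_prop) hθ
  norm_add_ω₁ z := by rw [oddTheta_add_ω₁, norm_mul, Complex.norm_exp]; simp
  norm_add_ω₂ z := by
    rw [oddTheta_add_ω₂, norm_mul, Complex.norm_exp]
    congr 2
    simp [Complex.mul_re, Complex.mul_im]

theorem exists_oddTheta_ne_zero (hτ : 0 < (L.ω₂ / L.ω₁).im) : ∃ z, oddTheta L z ≠ 0 := by
  obtain ⟨u, hu⟩ := exists_jacobiTheta₂_ne_zero hτ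
  refine ⟨(u - (1 / 2 + L.ω₂ / L.ω₁ / 2)) * L.ω₁, mul_ne_zero (Complex.exp_ne_zero _) ?_⟩
  rwa [mul_div_cancel_right₀ _ (ω₁_ne_zero L), sub_add_cancel]

end OddTheta

section GaussianMultiples

variable {L : PeriodPair}

/-- The multiple `exp (c z²) σ(z)` of the sigma function, which for suitable `c` is the modified
sigma function or a theta function of `L`. -/
noncomputable def gaussSigma (L : PeriodPair) (c z : ℂ) : ℂ := Complex.exp (c * z ^ 2) * σ[L] z

theorem differentiable_gaussSigma (L : PeriodPair) (c : ℂ) : Differentiable ℂ (gaussSigma L c) := by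
  have := differentiable_wSigma L
  unfold gaussSigma
  fun_prop

theorem gaussSigma_eq_zero_iff {c z : ℂ} : gaussSigma L c z = 0 ↔ z ∈ L.lattice := by
  rw [gaussSigma, mul_eq_zero, wSigma_eq_zero_iff, or_iff_right (Complex.exp_ne_zero _)]

theorem deriv_gaussSigma_ne_zero {c w : ℂ} (hw : w ∈ L.lattice) :
    deriv (gaussSigma L c) w ≠ 0 := by
  have hσ : deriv σ[L] w ≠ 0 := deriv_ne_zero_of_mem_expLinearPeriods (differentiable_wSigma L 0)
    (lattice_le_expLinearPeriods_wSigma L hw) (wSigma_zero L) (by simp [deriv_wSigma_zero])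
  have hmul : deriv (gaussSigma L c) w = deriv (fun z => Complex.exp (c * z ^ 2)) w * σ[L] w +
      Complex.exp (c * w ^ 2) * deriv σ[L] w :=
    deriv_fun_mul (by fun_prop) (differentiable_wSigma L w)
  rw [hmul, (wSigma_eq_zero_iff L).2 hw, mul_zero, zero_add]
  exact mul_ne_zero (Complex.exp_ne_zero _) hσ

theorem gaussSigma_add {c w : ℂ} (hw : w ∈ L.lattice) (hw2 : w / 2 ∉ L.lattice) (z : ℂ) :
    gaussSigma L c (z + w) =
      -Complex.exp ((2 * c * w + 2 * ζ[L] (w / 2)) * (z + w / 2)) * gaussSigma L c z := by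
  have hexponent : c * (z + w) ^ 2 = c * z ^ 2 + 2 * c * w * (z + w / 2) := by ring
  rw [gaussSigma, gaussSigma, wSigma_add hw hw2, hexponent, add_mul, Complex.exp_add,
    Complex.exp_add]
  ring

end GaussianMultiples

section LegendreRelation

variable {L : PeriodPair}

theorem exists_int_mul_two_pi_I (L : PeriodPair) : ∃ k : ℤ,
    2 * ζ[L] (L.ω₁ / 2) * L.ω₂ - 2 * ζ[L] (L.ω₂ / 2) * L.ω₁ = k * (2 * Real.pi * Complex.I) := by
  rw [← Complex.exp_eq_one_iff, Complex.exp_sub, div_eq_one_iff_eq (Complex.exp_ne_zero _)]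
  have hadd₁ := wSigma_add L.ω₁_mem_lattice L.ω₁_div_two_notMem_lattice
  have hadd₂ := wSigma_add L.ω₂_mem_lattice L.ω₂_div_two_notMem_lattice
  set η₁ := 2 * ζ[L] (L.ω₁ / 2)
  set η₂ := 2 * ζ[L] (L.ω₂ / 2)
  set z := L.ω₁ / 2
  have hz : σ[L] z ≠ 0 := mt (wSigma_eq_zero_iff L).1 L.ω₁_div_two_notMem_lattice
  have hcomm : σ[L] (z + L.ω₁ + L.ω₂) = σ[L] (z + L.ω₂ + L.ω₁) := by rw [add_right_comm]
  rw [hadd₂, hadd₁, hadd₁, hadd₂] at hcomm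
  have hfactor : Complex.exp (η₂ * (z + L.ω₁ + L.ω₂ / 2)) * Complex.exp (η₁ * (z + L.ω₁ / 2)) =
      Complex.exp (η₁ * (z + L.ω₂ + L.ω₁ / 2)) * Complex.exp (η₂ * (z + L.ω₂ / 2)) :=
    mul_right_cancel₀ hz (by linear_combination hcomm)
  refine mul_right_cancel₀ (mul_ne_zero (Complex.exp_ne_zero (η₁ * (z + L.ω₁ / 2)))
    (Complex.exp_ne_zero (η₂ * (z + L.ω₂ / 2)))) ?_
  simp only [mul_add, Complex.exp_add] at hfactor ⊢
  linear_combination -hfactor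

theorem hasThetaDegree_gaussSigma {k : ℤ} (hk : 2 * ζ[L] (L.ω₁ / 2) * L.ω₂ -
    2 * ζ[L] (L.ω₂ / 2) * L.ω₁ = k * (2 * Real.pi * Complex.I)) :
    HasThetaDegree L (gaussSigma L (-(ζ[L] (L.ω₁ / 2) / L.ω₁))) k where
  differentiable := differentiable_gaussSigma L _
  norm_add_ω₁ z := by
    have hω := ω₁_ne_zero L
    have hexponent : (2 * -(ζ[L] (L.ω₁ / 2) / L.ω₁) * L.ω₁ + 2 * ζ[L] (L.ω₁ / 2)) *
        (z + L.ω₁ / 2) = 0 := by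
      field_simp
      ring
    rw [gaussSigma_add L.ω₁_mem_lattice L.ω₁_div_two_notMem_lattice, hexponent, Complex.exp_zero,
      norm_mul, norm_neg, norm_one, one_mul]
  norm_add_ω₂ z := by
    have hω := ω₁_ne_zero L
    have hexponent : (2 * -(ζ[L] (L.ω₁ / 2) / L.ω₁) * L.ω₂ + 2 * ζ[L] (L.ω₂ / 2)) *
        (z + L.ω₂ / 2) = -(((2 * Real.pi * k : ℝ) : ℂ) * Complex.I * ((z + L.ω₂ / 2) / L.ω₁)) := by
      push_cast
      field_simp
      linear_combination -(z + L.ω₂ / 2) * hk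
    rw [gaussSigma_add L.ω₂_mem_lattice L.ω₂_div_two_notMem_lattice, hexponent, norm_mul, norm_neg,
      Complex.norm_exp, mul_assoc, Complex.neg_re, Complex.re_ofReal_mul, Complex.I_mul_re,
      mul_neg, neg_neg]

theorem legendre_relation (hτ : 0 < (L.ω₂ / L.ω₁).im) :
    2 * ζ[L] (L.ω₁ / 2) * L.ω₂ - 2 * ζ[L] (L.ω₂ / 2) * L.ω₁ = 2 * Real.pi * Complex.I := by
  obtain ⟨k, hk⟩ := exists_int_mul_two_pi_I L
  have hs := hasThetaDegree_gaussSigma hk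
  set s := gaussSigma L (-(ζ[L] (L.ω₁ / 2) / L.ω₁))
  have hk_le : k ≤ 1 := by
    have h : (k : ℝ) ≤ 1 := (hasThetaDegree_oddTheta hτ).degree_le hs hτ
      (fun w hw => ⟨oddTheta_eq_zero (gaussSigma_eq_zero_iff.1 hw),
        deriv_gaussSigma_ne_zero (gaussSigma_eq_zero_iff.1 hw)⟩) (exists_oddTheta_ne_zero hτ)
    exact_mod_cast h
  have hk_pos : 0 < k := by
    by_contra! hk0
    obtain ⟨C, hC⟩ := hs.exists_eq_const_mul (HasThetaDegree.one L) hτ (by exact_mod_cast hk0)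
      (fun w hw => absurd hw one_ne_zero)
    have hs0 : s 0 = 0 := gaussSigma_eq_zero_iff.2 L.lattice.zero_mem
    have hs1 : s (L.ω₁ / 2) = 0 := by rw [hC, ← hC 0, hs0]
    exact L.ω₁_div_two_notMem_lattice (gaussSigma_eq_zero_iff.1 hs1)
  rw [hk, le_antisymm hk_le hk_pos, Int.cast_one, one_mul]

end LegendreRelation

section Transversal

variable {G ι : Type*} [AddCommGroup G] {Λ M : AddSubgroup G} {ζ : ι → G}

/-- `ζ` is a complete irredundant family of representatives of the cosets of `Λ` in the larger
subgroup `M`. -/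
structure IsTransversal (Λ M : AddSubgroup G) (ζ : ι → G) : Prop where
  le : Λ ≤ M
  mem (j : ι) : ζ j ∈ M
  existsUnique_sub_mem : ∀ x ∈ M, ∃! j, x - ζ j ∈ Λ

theorem IsTransversal.eq_of_sub_mem (h : IsTransversal Λ M ζ) {j k : ι} (hjk : ζ j - ζ k ∈ Λ) :
    j = k :=
  (h.existsUnique_sub_mem (ζ j) (h.mem j)).unique (by simp) hjk

theorem IsTransversal.sub_notMem (h : IsTransversal Λ M ζ) {z : G} (hz : z ∉ M) (j : ι) :
    z - ζ j ∉ Λ :=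
  fun hj => hz (sub_add_cancel z (ζ j) ▸ M.add_mem (h.le hj) (h.mem j))

theorem apply_vadd_of_periodic {α : Type*} {F : G → α} (hF : ∀ z, ∀ w ∈ Λ, F (z + w) = F z)
    (v : Λ) (z : G) : F (v +ᵥ z) = F z := by
  rw [← hF z v v.2, add_comm]
  rfl

variable [MeasurableSpace G] {μ : Measure G} {s D : Set G} {E : Type*} [NormedAddCommGroup E]
  [NormedSpace ℝ E] {F : G → E}

theorem IsTransversal.aedisjoint_vadd (h : IsTransversal Λ M ζ) (hD : IsAddFundamentalDomain M D μ)
    {v w : G} (hv : v ∈ Λ) (hw : w ∈ Λ) {j k : ι} (hne : (v, j) ≠ (w, k)) :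
    AEDisjoint μ (v +ᵥ ζ j +ᵥ D) (w +ᵥ ζ k +ᵥ D) := by
  rw [vadd_vadd, vadd_vadd]
  refine hD.aedisjoint (i := ⟨v + ζ j, M.add_mem (h.le hv) (h.mem j)⟩)
    (j := ⟨w + ζ k, M.add_mem (h.le hw) (h.mem k)⟩) fun heq => hne ?_
  have hsum : v + ζ j = w + ζ k := congrArg Subtype.val heq
  have hdiff : ζ j - ζ k = w - v := sub_eq_sub_iff_add_eq_add.2 (by rw [add_comm, hsum])
  obtain rfl : j = k := h.eq_of_sub_mem (hdiff ▸ Λ.sub_mem hw hv)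
  rw [add_right_cancel hsum]

variable [MeasurableAdd G] [μ.IsAddLeftInvariant]

theorem IsTransversal.isAddFundamentalDomain_iUnion [Countable ι] (h : IsTransversal Λ M ζ)
    (hD : IsAddFundamentalDomain M D μ) : IsAddFundamentalDomain Λ (⋃ j, ζ j +ᵥ D) μ where
  nullMeasurableSet := .iUnion fun j => hD.nullMeasurableSet_vadd ⟨ζ j, h.mem j⟩
  ae_covers := by
    filter_upwards [hD.ae_covers] with x ⟨⟨m, hm⟩, hx⟩
    obtain ⟨j, hj, -⟩ := h.existsUnique_sub_mem (-m) (M.neg_mem hm)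
    refine ⟨⟨ζ j + m, by simpa [add_comm] using Λ.neg_mem hj⟩, Set.mem_iUnion.2 ⟨j, m + x, hx, ?_⟩⟩
    exact (add_assoc (ζ j) m x).symm
  aedisjoint v w hvw := by
    change AEDisjoint μ ((v : G) +ᵥ ⋃ j, ζ j +ᵥ D) ((w : G) +ᵥ ⋃ k, ζ k +ᵥ D)
    rw [Set.vadd_set_iUnion, Set.vadd_set_iUnion, AEDisjoint.iUnion_left_iff]
    refine fun j => AEDisjoint.iUnion_right_iff.2 fun k => ?_
    exact h.aedisjoint_vadd hD v.2 w.2 fun heq => hvw (Subtype.ext (congrArg Prod.fst heq))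

theorem IsTransversal.setIntegral_eq_card_smul [Fintype ι] [Countable M] (h : IsTransversal Λ M ζ)
    (hs : IsAddFundamentalDomain Λ s μ) (hD : IsAddFundamentalDomain M D μ)
    (hF : ∀ z, ∀ w ∈ M, F (z + w) = F z) (hint : IntegrableOn F s μ) :
    ∫ z in s, F z ∂μ = Fintype.card ι • ∫ z in D, F z ∂μ := by
  have hunion := h.isAddFundamentalDomain_iUnion hD
  have : Countable Λ := (AddSubgroup.inclusion_injective h.le).countable
  have hFΛ := apply_vadd_of_periodic fun z w hw => hF z w (h.le hw)
  have hpiece (j : ι) : ∫ z in ζ j +ᵥ D, F z ∂μ = ∫ z in D, F z ∂μ :=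
    (hD.vadd ⟨ζ j, h.mem j⟩).setIntegral_eq hD (apply_vadd_of_periodic hF)
  have hnull (j : ι) : NullMeasurableSet (ζ j +ᵥ D) μ := hD.nullMeasurableSet_vadd ⟨ζ j, h.mem j⟩
  have hdisj : Pairwise (Function.onFun (AEDisjoint μ) fun j => ζ j +ᵥ D) := fun j k hjk => by
    have := h.aedisjoint_vadd hD Λ.zero_mem Λ.zero_mem (j := j) (k := k) (by simpa using hjk)
    rwa [zero_vadd, zero_vadd] at this
  rw [hs.setIntegral_eq hunion hFΛ, integral_iUnion_ae hnull hdisj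
    ((hs.integrableOn_iff hunion hFΛ).1 hint), tsum_fintype, Finset.sum_congr rfl
    fun j _ => hpiece j, Finset.sum_const, Finset.card_univ]

end Transversal

section Translation

variable {G : Type*} [AddCommGroup G] [MeasurableSpace G] [MeasurableAdd G] {Λ : AddSubgroup G}
  [Countable Λ] {μ : Measure G} [μ.IsAddLeftInvariant] {s : Set G} {E : Type*}
  [NormedAddCommGroup E] {F : G → E}

theorem integrableOn_comp_add_right_iff (hs : IsAddFundamentalDomain Λ s μ)
    (hF : ∀ z, ∀ w ∈ Λ, F (z + w) = F z) (a : G) :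
    IntegrableOn (fun z => F (z + a)) s μ ↔ IntegrableOn F s μ := by
  have hFΛ := apply_vadd_of_periodic hF
  rw [hs.integrableOn_iff (hs.vadd_of_comm a) hFΛ, ← Set.image_vadd,
    (measurePreserving_vadd a μ).integrableOn_image (measurableEmbedding_const_vadd a)]
  simp only [Function.comp_def, vadd_eq_add, add_comm]

theorem setIntegral_comp_add_right [NormedSpace ℝ E] (hs : IsAddFundamentalDomain Λ s μ)
    (hF : ∀ z, ∀ w ∈ Λ, F (z + w) = F z) (a : G) :
    ∫ z in s, F (z + a) ∂μ = ∫ z in s, F z ∂μ := by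
  have hFΛ := apply_vadd_of_periodic hF
  rw [hs.setIntegral_eq (hs.vadd_of_comm a) hFΛ, ← Set.image_vadd,
    (measurePreserving_vadd a μ).setIntegral_image_emb (measurableEmbedding_const_vadd a)]
  simp only [vadd_eq_add, add_comm]

end Translation

section Dilation

variable {c : ℂ}

theorem map_mul_left_volume (hc : c ≠ 0) :
    Measure.map (fun z => c * z) volume = ENNReal.ofReal (‖c‖ ^ 2)⁻¹ • (volume : Measure ℂ) := by
  have hdet : LinearMap.det (LinearMap.mulLeft ℝ c) = ‖c‖ ^ 2 := by
    rw [← Complex.normSq_eq_norm_sq, ← Algebra.norm_complex_apply, Algebra.norm_apply]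
    rfl
  have hmap := Measure.map_linearMap_addHaar_eq_smul_addHaar volume
    (hdet.trans_ne (pow_ne_zero 2 (norm_ne_zero_iff.2 hc)))
  rwa [hdet, abs_of_nonneg (by positivity)] at hmap

theorem measurableEmbedding_mul_left (hc : c ≠ 0) : MeasurableEmbedding fun z => c * z :=
  (Homeomorph.mulLeft₀ c hc).measurableEmbedding

theorem setIntegral_preimage_mul_left {E : Type*} [NormedAddCommGroup E] [NormedSpace ℝ E]
    (hc : c ≠ 0) (s : Set ℂ) (F : ℂ → E) :
    ∫ z in (fun z => c * z) ⁻¹' s, F (c * z) = (‖c‖ ^ 2)⁻¹ • ∫ z in s, F z := by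
  rw [← (measurableEmbedding_mul_left hc).setIntegral_map, map_mul_left_volume hc,
    Measure.restrict_smul, integral_smul_measure, ENNReal.toReal_ofReal (by positivity)]

theorem quasiMeasurePreserving_mul_left (hc : c ≠ 0) :
    Measure.QuasiMeasurePreserving (fun z : ℂ => c * z) volume volume :=
  ⟨by fun_prop, by rw [map_mul_left_volume hc]; exact Measure.smul_absolutelyContinuous⟩

theorem isAddFundamentalDomain_preimage_mul_left (hc : c ≠ 0) {M : AddSubgroup ℂ} {s : Set ℂ}
    (hs : IsAddFundamentalDomain M s volume) :
    IsAddFundamentalDomain (M.comap (AddMonoidHom.mulLeft c)) ((fun z => c * z) ⁻¹' s)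
      volume := by
  let e (w : M) : M.comap (AddMonoidHom.mulLeft c) :=
    ⟨c⁻¹ * w, by simp [AddSubgroup.mem_comap, mul_inv_cancel_left₀ hc]⟩
  refine hs.preimage_of_equiv (quasiMeasurePreserving_mul_left hc) (e := e)
    ⟨fun v w hvw => ?_, fun w => ?_⟩ fun w z => ?_
  · exact Subtype.ext (mul_left_cancel₀ (inv_ne_zero hc) (congrArg Subtype.val hvw))
  · exact ⟨⟨c * w, w.2⟩, Subtype.ext (inv_mul_cancel_left₀ hc _)⟩
  · change c * (c⁻¹ * w + z) = w + c * z
    rw [mul_add, mul_inv_cancel_left₀ hc]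

end Dilation

section FundamentalParallelogram

variable {L : PeriodPair}

theorem mem_latticeSet_iff {x : ℂ} : x ∈ latticeSet L.ω₁ L.ω₂ ↔ x ∈ L.lattice := by
  simp only [PeriodPair.mem_lattice, latticeSet, Set.mem_ofPred_eq, eq_comm]

theorem fundDomain_eq (L : PeriodPair) :
    fundDomain L.ω₁ L.ω₂ = ZSpan.fundamentalDomain L.basis := by
  have hrepr (p : ℝ × ℝ) : L.basis.equivFun ((p.1 : ℂ) * L.ω₁ + (p.2 : ℂ) * L.ω₂) =
      ![p.1, p.2] := by
    rw [← LinearEquiv.eq_symm_apply, Module.Basis.equivFun_symm_apply]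
    simp
  ext z
  rw [ZSpan.mem_fundamentalDomain, fundDomain, Set.mem_image]
  constructor
  · rintro ⟨p, ⟨hx, hy⟩, rfl⟩
    simp_rw [← Module.Basis.equivFun_apply, hrepr]
    exact Fin.forall_fin_two.2 ⟨hx, hy⟩
  · intro h
    refine ⟨(L.basis.repr z 0, L.basis.repr z 1), ⟨h 0, h 1⟩, ?_⟩
    simpa using L.basis.sum_repr z

theorem isAddFundamentalDomain_fundDomain (L : PeriodPair) :
    IsAddFundamentalDomain L.lattice.toAddSubgroup (fundDomain L.ω₁ L.ω₂) volume := by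
  rw [fundDomain_eq, L.lattice_eq_span_range_basis]
  exact ZSpan.isAddFundamentalDomain' L.basis volume

theorem isBounded_fundDomain (L : PeriodPair) : Bornology.IsBounded (fundDomain L.ω₁ L.ω₂) := by
  rw [fundDomain_eq]
  exact ZSpan.fundamentalDomain_isBounded L.basis

theorem volume_real_fundDomain (L : PeriodPair) :
    volume.real (fundDomain L.ω₁ L.ω₂) = |L.ω₁.re * L.ω₂.im - L.ω₂.re * L.ω₁.im| := by
  have hunit : volume.real (ZSpan.fundamentalDomain Complex.basisOneI) = 1 := by
    rw [measureReal_def, measure_congr (ZSpan.fundamentalDomain_ae_parallelepiped _ _),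
      ← Complex.toBasis_orthonormalBasisOneI, OrthonormalBasis.coe_toBasis,
      Complex.orthonormalBasisOneI.volume_parallelepiped, ENNReal.toReal_one]
  rw [fundDomain_eq, ZSpan.measureReal_fundamentalDomain L.basis volume Complex.basisOneI, hunit,
    mul_one, Module.Basis.det_apply, Matrix.det_fin_two]
  simp [Module.Basis.toMatrix_apply]

instance (L : PeriodPair) : Countable L.lattice.toAddSubgroup :=
  inferInstanceAs (Countable L.lattice)

theorem ae_notMem_lattice (L : PeriodPair) : ∀ᵐ z : ℂ, z ∉ L.lattice :=
  measure_eq_zero_iff_ae_notMem.1 (Set.Countable.measure_zero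
    (Set.countable_coe_iff.1 (inferInstanceAs (Countable L.lattice))) volume)

end FundamentalParallelogram

section NormalizedLattice

variable {L : PeriodPair}

/-- The normalization of the paper: `ω₁` is a positive real number, `Im ω₂ > 0` and the covolume
is `π / 2`. -/
structure IsNormalized (L : PeriodPair) : Prop where
  ω₁_im : L.ω₁.im = 0
  ω₁_re_pos : 0 < L.ω₁.re
  ω₂_im_pos : 0 < L.ω₂.im
  area : L.ω₁.re * L.ω₂.im = Real.pi / 2

theorem IsNormalized.ofReal_re_ω₁ (h : IsNormalized L) : (L.ω₁.re : ℂ) = L.ω₁ :=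
  Complex.ext rfl h.ω₁_im.symm

theorem IsNormalized.conj_ω₁ (h : IsNormalized L) : starRingEnd ℂ L.ω₁ = L.ω₁ :=
  Complex.conj_eq_iff_im.2 h.ω₁_im

theorem IsNormalized.conj_ω₂_mul_ω₁ (h : IsNormalized L) :
    starRingEnd ℂ L.ω₂ * L.ω₁ = L.ω₂ * L.ω₁ - Real.pi * Complex.I := by
  have harea : (L.ω₁ * L.ω₂.im : ℂ) = Real.pi / 2 := by
    rw [← h.ofReal_re_ω₁]
    exact_mod_cast h.area
  have hsub := Complex.sub_conj L.ω₂
  push_cast at hsub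
  linear_combination -L.ω₁ * hsub - 2 * Complex.I * harea

theorem div_im_of_im_eq_zero {a : ℂ} (ha : a.im = 0) (b : ℂ) : (b / a).im = b.im / a.re := by
  rw [← Complex.div_ofReal_im, Complex.ext (w := a) (z := a.re) rfl ha.symm]

theorem IsNormalized.div_im_pos (h : IsNormalized L) : 0 < (L.ω₂ / L.ω₁).im := by
  rw [div_im_of_im_eq_zero h.ω₁_im]
  exact div_pos h.ω₂_im_pos h.ω₁_re_pos

theorem bconst_quasiPeriod_ω₁ (h : IsNormalized L) :
    2 * bconst L.ω₁ L.ω₂ * L.ω₁ + 2 * ζ[L] (L.ω₁ / 2) = 2 * starRingEnd ℂ L.ω₁ := by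
  have hω := ω₁_ne_zero L
  rw [bconst, lambda1, h.conj_ω₁]
  field_simp
  ring

-- Legendre's relation turns the normalization of `b` along `ω₁` into the one along `ω₂`.
theorem bconst_quasiPeriod_ω₂ (h : IsNormalized L) :
    2 * bconst L.ω₁ L.ω₂ * L.ω₂ + 2 * ζ[L] (L.ω₂ / 2) = 2 * starRingEnd ℂ L.ω₂ := by
  have hω := ω₁_ne_zero L
  have hlegendre := legendre_relation h.div_im_pos
  have hconj := h.conj_ω₂_mul_ω₁
  refine mul_right_cancel₀ hω ?_
  rw [bconst, lambda1]
  field_simp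
  linear_combination -hlegendre / 2 - hconj

end NormalizedLattice

section NormSigma

variable {L : PeriodPair} {w z α : ℂ}

/-- The doubly periodic function `|σ_*(z)| exp (-|z|²)`, whose logarithm is the unipolar Green
function with pole `0` up to the constant `A_Λ`. -/
noncomputable def normSigma (L : PeriodPair) (z : ℂ) : ℝ :=
  ‖sigmaStar L.ω₁ L.ω₂ z‖ * Real.exp (-‖z‖ ^ 2)

theorem differentiable_sigmaStar (L : PeriodPair) : Differentiable ℂ (sigmaStar L.ω₁ L.ω₂) :=
  differentiable_gaussSigma L _

theorem sigmaStar_eq_zero_iff : sigmaStar L.ω₁ L.ω₂ z = 0 ↔ z ∈ L.lattice := gaussSigma_eq_zero_iff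

theorem deriv_sigmaStar_ne_zero (hw : w ∈ L.lattice) : deriv (sigmaStar L.ω₁ L.ω₂) w ≠ 0 :=
  deriv_gaussSigma_ne_zero hw

theorem normSigma_ne_zero (hz : z ∉ L.lattice) : normSigma L z ≠ 0 :=
  mul_ne_zero (norm_ne_zero_iff.2 (mt sigmaStar_eq_zero_iff.1 hz)) (Real.exp_ne_zero _)

theorem log_normSigma (hz : z ∉ L.lattice) :
    Real.log (normSigma L z) = Real.log ‖sigmaStar L.ω₁ L.ω₂ z‖ - ‖z‖ ^ 2 := by
  rw [normSigma, Real.log_mul (norm_ne_zero_iff.2 (mt sigmaStar_eq_zero_iff.1 hz))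
    (Real.exp_ne_zero _), Real.log_exp, sub_eq_add_neg]

theorem normSigma_add_of_quasiPeriod (hw : w ∈ L.lattice) (hw2 : w / 2 ∉ L.lattice)
    (hquasi : 2 * bconst L.ω₁ L.ω₂ * w + 2 * ζ[L] (w / 2) = 2 * starRingEnd ℂ w) (z : ℂ) :
    normSigma L (z + w) = normSigma L z := by
  have hre : (2 * starRingEnd ℂ w * (z + w / 2)).re - ‖z + w‖ ^ 2 = -‖z‖ ^ 2 := by
    simp only [← Complex.normSq_eq_norm_sq, Complex.normSq_apply, Complex.mul_re, Complex.mul_im,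
      Complex.add_re, Complex.add_im, Complex.conj_re, Complex.conj_im, Complex.div_ofNat_re,
      Complex.div_ofNat_im, Complex.re_ofNat, Complex.im_ofNat]
    ring
  have hadd : sigmaStar L.ω₁ L.ω₂ (z + w) =
      -Complex.exp (2 * starRingEnd ℂ w * (z + w / 2)) * sigmaStar L.ω₁ L.ω₂ z :=
    hquasi ▸ gaussSigma_add hw hw2 z
  rw [normSigma, normSigma, hadd, norm_mul, norm_neg, Complex.norm_exp, ← hre, sub_eq_add_neg,
    Real.exp_add]
  ring

theorem IsNormalized.normSigma_add (h : IsNormalized L) (z : ℂ) (hw : w ∈ L.lattice) :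
    normSigma L (z + w) = normSigma L z :=
  forall_mem_lattice_of_periodic
    (normSigma_add_of_quasiPeriod L.ω₁_mem_lattice L.ω₁_div_two_notMem_lattice
      (bconst_quasiPeriod_ω₁ h))
    (normSigma_add_of_quasiPeriod L.ω₂_mem_lattice L.ω₂_div_two_notMem_lattice
      (bconst_quasiPeriod_ω₂ h)) z hw

theorem locallyIntegrable_log_normSigma (L : PeriodPair) :
    LocallyIntegrable fun z => Real.log (normSigma L z) := by
  have hlog : LocallyIntegrable fun z => Real.log ‖sigmaStar L.ω₁ L.ω₂ z‖ := fun z₀ =>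
    integrableAtFilter_log_norm ((differentiable_sigmaStar L).analyticAt z₀) fun h =>
      have hdense := dense_setOf_ne_zero (differentiable_sigmaStar L) fun w hw =>
        deriv_sigmaStar_ne_zero (sigmaStar_eq_zero_iff.1 hw)
      have ⟨_, hz, hz0⟩ := hdense.inter_nhds_nonempty h
      hz hz0
  have hsq : LocallyIntegrable fun z : ℂ => ‖z‖ ^ 2 := Continuous.locallyIntegrable (by fun_prop)
  refine (hlog.sub hsq).congr ?_
  filter_upwards [ae_notMem_lattice L] with z hz using (log_normSigma hz).symm

theorem integrableOn_log_normSigma (L : PeriodPair) :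
    IntegrableOn (fun z => Real.log (normSigma L z)) (fundDomain L.ω₁ L.ω₂) :=
  ((locallyIntegrable_log_normSigma L).integrableOn_isCompact
    (isBounded_fundDomain L).isCompact_closure).mono_set subset_closure

theorem integral_log_normSigma (L : PeriodPair) :
    ∫ z in fundDomain L.ω₁ L.ω₂, Real.log (normSigma L z) =
      Real.pi / 2 * Aconst L.ω₁ L.ω₂ := by
  have hae : (fun z => Real.log (normSigma L z)) =ᵐ[volume.restrict (fundDomain L.ω₁ L.ω₂)]
      fun z => Real.log ‖sigmaStar L.ω₁ L.ω₂ z‖ - ‖z‖ ^ 2 := by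
    filter_upwards [ae_restrict_of_ae (ae_notMem_lattice L)] with z hz using log_normSigma hz
  rw [integral_congr_ae hae, Aconst, ← mul_assoc, div_mul_div_cancel₀ two_ne_zero,
    div_self Real.pi_ne_zero, one_mul]

theorem Utorus_eq (hzα : z - α ∉ L.lattice) :
    Utorus L.ω₁ L.ω₂ z α = Real.log (normSigma L (z - α)) - Aconst L.ω₁ L.ω₂ := by
  rw [Utorus, log_normSigma hzα]

end NormSigma

section ProductIdentity

variable {L W : PeriodPair} {ι : Type*} [Fintype ι] {c : ℂ} {ζ : ι → ℂ}

/-- The entire function `exp (2 ᾱ z - |α|²) σ_*(z - α)`: unlike `pseudoPoly`, it is holomorphic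
in `z`, and it becomes `pseudoPoly` in absolute value when damped by `exp (-|z|²)`. -/
noncomputable def shiftedSigma (L : PeriodPair) (α z : ℂ) : ℂ :=
  Complex.exp (2 * starRingEnd ℂ α * z - (‖α‖ ^ 2 : ℝ)) * sigmaStar L.ω₁ L.ω₂ (z - α)

theorem differentiable_shiftedSigma (L : PeriodPair) (α : ℂ) :
    Differentiable ℂ (shiftedSigma L α) := by
  have := differentiable_sigmaStar L
  unfold shiftedSigma
  fun_prop

theorem norm_shiftedSigma_mul_exp (L : PeriodPair) (α z : ℂ) :
    ‖shiftedSigma L α z‖ * Real.exp (-‖z‖ ^ 2) = normSigma L (z - α) := by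
  have hre : (2 * starRingEnd ℂ α * z - (‖α‖ ^ 2 : ℝ)).re - ‖z‖ ^ 2 = -‖z - α‖ ^ 2 := by
    simp only [← Complex.normSq_eq_norm_sq, Complex.normSq_apply, Complex.mul_re, Complex.mul_im,
      Complex.sub_re, Complex.sub_im, Complex.conj_re, Complex.conj_im, Complex.re_ofNat,
      Complex.im_ofNat, Complex.ofReal_re]
    ring
  rw [shiftedSigma, normSigma, norm_mul, Complex.norm_exp, ← hre, sub_eq_add_neg (Complex.re _),
    Real.exp_add]
  ring

theorem prod_normSigma (L : PeriodPair) (ζ : ι → ℂ) (z : ℂ) :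
    ∏ j, normSigma L (z - ζ j) =
      ‖∏ j, shiftedSigma L (ζ j) z‖ * Real.exp (-(Fintype.card ι * ‖z‖ ^ 2)) := by
  simp only [← norm_shiftedSigma_mul_exp, Finset.prod_mul_distrib, Finset.prod_const, norm_prod,
    Finset.card_univ, ← Real.exp_nat_mul, mul_neg]

theorem normSigma_mul (hc : ‖c‖ ^ 2 = Fintype.card ι) (z : ℂ) :
    normSigma W (c * z) =
      ‖sigmaStar W.ω₁ W.ω₂ (c * z)‖ * Real.exp (-(Fintype.card ι * ‖z‖ ^ 2)) := by
  rw [normSigma, norm_mul, mul_pow, hc]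

/-- The lattice `c⁻¹ Λ_W`, the superlattice `Λ_N` of the paper when `c = √N`. -/
def contractedLattice (c : ℂ) (W : PeriodPair) : AddSubgroup ℂ :=
  W.lattice.toAddSubgroup.comap (AddMonoidHom.mulLeft c)

theorem mem_contractedLattice {x : ℂ} : x ∈ contractedLattice c W ↔ c * x ∈ W.lattice := Iff.rfl

theorem ne_zero_of_norm_sq_eq_card
    (h : IsTransversal L.lattice.toAddSubgroup (contractedLattice c W) ζ)
    (hc : ‖c‖ ^ 2 = Fintype.card ι) : c ≠ 0 := by
  obtain ⟨j, -⟩ := h.existsUnique_sub_mem 0 (zero_mem _)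
  have : Nonempty ι := ⟨j⟩
  rintro rfl
  simp [eq_comm] at hc

theorem exists_prod_normSigma_eq (hL : IsNormalized L) (hW : IsNormalized W)
    (h : IsTransversal L.lattice.toAddSubgroup (contractedLattice c W) ζ)
    (hc : ‖c‖ ^ 2 = Fintype.card ι) :
    ∃ K, ∀ z, ∏ j, normSigma L (z - ζ j) = K * normSigma W (c * z) := by
  have hσ := differentiable_sigmaStar W
  have hσ' (w : ℂ) : deriv (fun z => sigmaStar W.ω₁ W.ω₂ (c * z)) w =
      c * deriv (sigmaStar W.ω₁ W.ω₂) (c * w) := deriv_comp_mul_left c _ w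
  obtain ⟨C, hC⟩ := exists_eq_const_mul_of_periodic L.lattice
    (f := fun z => ∏ j, shiftedSigma L (ζ j) z) (g := fun z => sigmaStar W.ω₁ W.ω₂ (c * z))
    (Differentiable.fun_finsetProd fun j _ => differentiable_shiftedSigma L (ζ j)) (by fun_prop)
    (fun w hw => by
      obtain ⟨j, hj, -⟩ := h.existsUnique_sub_mem w (sigmaStar_eq_zero_iff.1 hw)
      refine ⟨Finset.prod_eq_zero (Finset.mem_univ j) ?_, ?_⟩
      · rw [shiftedSigma, sigmaStar_eq_zero_iff.2 hj, mul_zero]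
      · rw [hσ']
        exact mul_ne_zero (ne_zero_of_norm_sq_eq_card h hc)
          (deriv_sigmaStar_ne_zero (sigmaStar_eq_zero_iff.1 hw)))
    (φ := fun z => Real.exp (-(Fintype.card ι * ‖z‖ ^ 2)))
    (ψ := fun z => Real.exp (-(Fintype.card ι * ‖z‖ ^ 2)))
    (by fun_prop) (by fun_prop) (fun _ => Real.exp_pos _) (fun _ => le_rfl)
    (fun z w hw => by
      simp only [← prod_normSigma, add_sub_right_comm, hL.normSigma_add _ hw])
    (fun z w hw => by
      rw [← normSigma_mul hc, ← normSigma_mul hc, mul_add,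
        hW.normSigma_add _ (mem_contractedLattice.1 (h.le hw))])
  refine ⟨‖C‖, fun z => ?_⟩
  rw [prod_normSigma, hC, norm_mul, normSigma_mul hc, mul_assoc]

theorem exists_sum_log_normSigma_eq (hL : IsNormalized L) (hW : IsNormalized W)
    (h : IsTransversal L.lattice.toAddSubgroup (contractedLattice c W) ζ)
    (hc : ‖c‖ ^ 2 = Fintype.card ι) :
    ∃ K, ∀ z, c * z ∉ W.lattice →
      ∑ j, Real.log (normSigma L (z - ζ j)) = K + Real.log (normSigma W (c * z)) := by
  obtain ⟨K, hK⟩ := exists_prod_normSigma_eq hL hW h hc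
  refine ⟨Real.log K, fun z hz => ?_⟩
  have hne (j : ι) : normSigma L (z - ζ j) ≠ 0 := normSigma_ne_zero (h.sub_notMem hz j)
  have hprod : K * normSigma W (c * z) ≠ 0 := hK z ▸ Finset.prod_ne_zero_iff.2 fun j _ => hne j
  rw [← Real.log_prod fun j _ => hne j, hK, Real.log_mul (left_ne_zero_of_mul hprod)
    (right_ne_zero_of_mul hprod)]

end ProductIdentity

section SumOfGreenFunctions

variable {L W : PeriodPair} {ι : Type*} [Fintype ι] {c : ℂ} {ζ : ι → ℂ}

theorem setIntegral_fundDomain_comp_mul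
    (h : IsTransversal L.lattice.toAddSubgroup (contractedLattice c W) ζ)
    (hc : ‖c‖ ^ 2 = Fintype.card ι) {F : ℂ → ℝ} (hF : ∀ z, ∀ w ∈ W.lattice, F (z + w) = F z)
    (hint : IntegrableOn (fun z => F (c * z)) (fundDomain L.ω₁ L.ω₂)) :
    ∫ z in fundDomain L.ω₁ L.ω₂, F (c * z) = ∫ z in fundDomain W.ω₁ W.ω₂, F z := by
  have hc0 := ne_zero_of_norm_sq_eq_card h hc
  have : Countable (contractedLattice c W) :=
    Set.Countable.preimage (s := (W.lattice : Set ℂ))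
      (Set.countable_coe_iff.1 (inferInstanceAs (Countable W.lattice)))
      (mul_right_injective₀ hc0)
  rw [h.setIntegral_eq_card_smul (isAddFundamentalDomain_fundDomain L)
    (isAddFundamentalDomain_preimage_mul_left hc0 (isAddFundamentalDomain_fundDomain W))
    (fun z w hw => by rw [mul_add, hF _ _ (mem_contractedLattice.1 hw)]) hint,
    setIntegral_preimage_mul_left hc0, hc, nsmul_eq_mul, smul_eq_mul, mul_inv_cancel_left₀]
  exact hc ▸ pow_ne_zero 2 (norm_ne_zero_iff.2 hc0)

theorem volume_real_fundDomain_eq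
    (h : IsTransversal L.lattice.toAddSubgroup (contractedLattice c W) ζ)
    (hc : ‖c‖ ^ 2 = Fintype.card ι) :
    volume.real (fundDomain W.ω₁ W.ω₂) = volume.real (fundDomain L.ω₁ L.ω₂) := by
  simpa using (setIntegral_fundDomain_comp_mul h hc (F := fun _ => 1) (fun _ _ _ => rfl)
    (integrableOn_const (isBounded_fundDomain L).measure_lt_top.ne)).symm

theorem IsNormalized.volume_real (hL : IsNormalized L) :
    volume.real (fundDomain L.ω₁ L.ω₂) = Real.pi / 2 := by
  rw [volume_real_fundDomain, hL.ω₁_im, mul_zero, sub_zero, hL.area, abs_of_pos (by positivity)]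

theorem IsNormalized.log_normSigma_add (hL : IsNormalized L) (z : ℂ) :
    ∀ w ∈ L.lattice.toAddSubgroup,
      Real.log (normSigma L (z + w)) = Real.log (normSigma L z) :=
  fun _ hw => by rw [hL.normSigma_add z hw]

theorem integrableOn_log_normSigma_sub (hL : IsNormalized L) (α : ℂ) :
    IntegrableOn (fun z => Real.log (normSigma L (z - α))) (fundDomain L.ω₁ L.ω₂) := by
  simpa only [sub_eq_add_neg] using (integrableOn_comp_add_right_iff
    (isAddFundamentalDomain_fundDomain L) hL.log_normSigma_add (-α)).2
    (integrableOn_log_normSigma L)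

theorem integral_log_normSigma_sub (hL : IsNormalized L) (α : ℂ) :
    ∫ z in fundDomain L.ω₁ L.ω₂, Real.log (normSigma L (z - α)) =
      Real.pi / 2 * Aconst L.ω₁ L.ω₂ := by
  rw [← integral_log_normSigma]
  simpa only [sub_eq_add_neg] using setIntegral_comp_add_right
    (F := fun z => Real.log (normSigma L z)) (isAddFundamentalDomain_fundDomain L)
    hL.log_normSigma_add (-α)

theorem sum_log_normSigma_eq (hL : IsNormalized L) (hW : IsNormalized W)
    (h : IsTransversal L.lattice.toAddSubgroup (contractedLattice c W) ζ)
    (hc : ‖c‖ ^ 2 = Fintype.card ι) {z : ℂ} (hz : c * z ∉ W.lattice) :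
    ∑ j, Real.log (normSigma L (z - ζ j)) =
      Fintype.card ι * Aconst L.ω₁ L.ω₂ - Aconst W.ω₁ W.ω₂ +
        Real.log (normSigma W (c * z)) := by
  obtain ⟨K, hK⟩ := exists_sum_log_normSigma_eq hL hW h hc
  have hsum : IntegrableOn (fun z => ∑ j, Real.log (normSigma L (z - ζ j)))
      (fundDomain L.ω₁ L.ω₂) :=
    integrable_finsetSum _ fun j _ => integrableOn_log_normSigma_sub hL (ζ j)
  have hconst : IntegrableOn (fun _ => K) (fundDomain L.ω₁ L.ω₂) :=
    integrableOn_const (isBounded_fundDomain L).measure_lt_top.ne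
  have hae : (fun z => ∑ j, Real.log (normSigma L (z - ζ j)) - K)
      =ᵐ[volume.restrict (fundDomain L.ω₁ L.ω₂)] fun z => Real.log (normSigma W (c * z)) := by
    filter_upwards [ae_restrict_of_ae ((quasiMeasurePreserving_mul_left
      (ne_zero_of_norm_sq_eq_card h hc)).ae (ae_notMem_lattice W))] with x hx
    rw [hK x hx, add_sub_cancel_left]
  have hint := setIntegral_fundDomain_comp_mul h hc (F := fun z => Real.log (normSigma W z))
    hW.log_normSigma_add ((hsum.sub hconst).congr hae)
  rw [← integral_congr_ae hae, integral_sub hsum hconst, integral_finsetSum _ fun j _ =>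
    integrableOn_log_normSigma_sub hL (ζ j), setIntegral_const, hL.volume_real,
    integral_log_normSigma] at hint
  simp only [integral_log_normSigma_sub hL, Finset.sum_const, Finset.card_univ, nsmul_eq_mul,
    smul_eq_mul] at hint
  have hKeq : K = Fintype.card ι * Aconst L.ω₁ L.ω₂ - Aconst W.ω₁ W.ω₂ := by
    refine mul_left_cancel₀ (div_ne_zero Real.pi_ne_zero two_ne_zero) ?_
    linear_combination -hint
  rw [hK z hz, hKeq]

theorem sum_Utorus_eq (hL : IsNormalized L) (hW : IsNormalized W)
    (h : IsTransversal L.lattice.toAddSubgroup (contractedLattice c W) ζ)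
    (hc : ‖c‖ ^ 2 = Fintype.card ι) {z : ℂ} (hz : c * z ∉ W.lattice) :
    ∑ j, Utorus L.ω₁ L.ω₂ z (ζ j) =
      Real.log ‖sigmaStar W.ω₁ W.ω₂ (c * z)‖ - Fintype.card ι * ‖z‖ ^ 2 - Aconst W.ω₁ W.ω₂ := by
  have hU (j : ι) : Utorus L.ω₁ L.ω₂ z (ζ j) =
      Real.log (normSigma L (z - ζ j)) - Aconst L.ω₁ L.ω₂ := Utorus_eq (h.sub_notMem hz j)
  simp only [hU, Finset.sum_sub_distrib, sum_log_normSigma_eq hL hW h hc hz, log_normSigma hz,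
    norm_mul, mul_pow, hc, Finset.sum_const, Finset.card_univ, nsmul_eq_mul]
  ring

end SumOfGreenFunctions

section Bridge

variable {ω₁ ω₂ ω₁' ω₂' c x : ℂ}

theorem linearIndependent_pair_of_im_eq_zero {a b : ℂ} (ha : a.im = 0) (ha' : a.re ≠ 0)
    (hb : b.im ≠ 0) : LinearIndependent ℝ ![a, b] := by
  refine LinearIndependent.pair_iff.2 fun s t h => ?_
  have ht : t = 0 := by simpa [ha, hb] using congrArg Complex.im h
  exact ⟨by simpa [ht, ha'] using congrArg Complex.re h, ht⟩

theorem mul_mem_latticeSet_iff (hc : c ≠ 0) :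
    c * x ∈ latticeSet (c * ω₁') (c * ω₂') ↔ x ∈ latticeSet ω₁' ω₂' := by
  simp only [latticeSet, Set.mem_ofPred_eq, mul_left_comm _ c, ← mul_add, mul_right_inj' hc]

theorem latticeSet_subset_latticeSet (h₁ : ω₁ ∈ latticeSet ω₁' ω₂')
    (h₂ : ω₂ ∈ latticeSet ω₁' ω₂') : latticeSet ω₁ ω₂ ⊆ latticeSet ω₁' ω₂' := by
  obtain ⟨a, b, rfl⟩ := h₁
  obtain ⟨a', b', rfl⟩ := h₂
  rintro _ ⟨m, n, rfl⟩
  exact ⟨m * a + n * a', m * b + n * b', by push_cast; ring⟩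

theorem sub_div_im_pos {a b : ℂ} (ha : a.im = 0) (ha' : 0 < a.re) (hb : 0 < b.im) (t : ℝ) :
    0 < ((t * b - a) / b).im := by
  have hb0 : b ≠ 0 := by rintro rfl; simp at hb
  rw [sub_div, mul_div_cancel_right₀ _ hb0, Complex.sub_im, Complex.ofReal_im, Complex.div_im, ha]
  have := Complex.normSq_pos.2 hb0
  have : 0 < a.re * b.im / Complex.normSq b := by positivity
  simpa using this

theorem IsNormalized.of_isTransversal {L W : PeriodPair} {ι : Type*} [Fintype ι] {ζ : ι → ℂ}
    (hL : IsNormalized L) (h : IsTransversal L.lattice.toAddSubgroup (contractedLattice c W) ζ)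
    (hc : ‖c‖ ^ 2 = Fintype.card ι) (him : W.ω₁.im = 0) (hre : 0 < W.ω₁.re)
    (hτ : 0 < (W.ω₂ / W.ω₁).im) : IsNormalized W := by
  have him₂ : 0 < W.ω₂.im := by
    rw [div_im_of_im_eq_zero him] at hτ
    exact (div_pos_iff_of_pos_right hre).1 hτ
  refine ⟨him, hre, him₂, ?_⟩
  rw [← hL.volume_real, ← volume_real_fundDomain_eq h hc, volume_real_fundDomain, him, mul_zero,
    sub_zero, abs_of_pos (mul_pos hre him₂)]

end Bridge

end TorusGreen

open TorusGreen in
theorem sum_green_eq_superlattice_green_general {ι : Type*} [Fintype ι] (ω₁ ω₂ : ℂ)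
    (h1 : ω₁.im = 0) (h1' : 0 < ω₁.re) (h2 : 0 < ω₂.im)
    (harea : ω₁.re * ω₂.im = Real.pi / 2)
    (ω₁' ω₂' : ℂ) (hle : latticeSet ω₁ ω₂ ⊆ latticeSet ω₁' ω₂') (hτ : 0 < (ω₂' / ω₁').im)
    (ζ : ι → ℂ) (hζmem : ∀ j, ζ j ∈ latticeSet ω₁' ω₂')
    (hζrep : ∀ x ∈ latticeSet ω₁' ω₂', ∃! j, x - ζ j ∈ latticeSet ω₁ ω₂)
    (c : ℂ) (hc : ‖c‖ ^ 2 = Fintype.card ι) (hrot : (c * ω₁').im = 0) (hrot' : 0 < (c * ω₁').re)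
    (z : ℂ) (hz : z ∉ latticeSet ω₁' ω₂') :
    ∑ j, Utorus ω₁ ω₂ z (ζ j) =
      Real.log ‖sigmaStar (c * ω₁') (c * ω₂') (c * z)‖ - Fintype.card ι * ‖z‖ ^ 2 -
        Aconst (c * ω₁') (c * ω₂') := by
  have hc0 : c ≠ 0 := by rintro rfl; simp at hrot'
  have hτc : 0 < (c * ω₂' / (c * ω₁')).im := by rwa [mul_div_mul_left _ _ hc0]
  have hne : (c * ω₂').im ≠ 0 := fun h => by simp [div_im_of_im_eq_zero hrot, h] at hτc
  let L : PeriodPair := ⟨ω₁, ω₂, linearIndependent_pair_of_im_eq_zero h1 h1'.ne' h2.ne'⟩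
  let W : PeriodPair :=
    ⟨c * ω₁', c * ω₂', linearIndependent_pair_of_im_eq_zero hrot hrot'.ne' hne⟩
  have hL : IsNormalized L := ⟨h1, h1', h2, harea⟩
  have hmem (x : ℂ) : c * x ∈ W.lattice ↔ x ∈ latticeSet ω₁' ω₂' :=
    mem_latticeSet_iff.symm.trans (mul_mem_latticeSet_iff hc0)
  have h : IsTransversal L.lattice.toAddSubgroup (contractedLattice c W) ζ :=
    { le := fun x hx => (hmem x).2 (hle (mem_latticeSet_iff.2 hx))
      mem := fun j => (hmem _).2 (hζmem j)
      existsUnique_sub_mem := fun x hx =>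
        (existsUnique_congr fun _ => mem_latticeSet_iff (L := L)).1 (hζrep x ((hmem x).1 hx)) }
  exact sum_Utorus_eq hL (hL.of_isTransversal h hc hrot hrot' hτc) h hc (mt (hmem z).1 hz)

/-- the sum of translates of the unipolar Green function over a
complete set of representatives of `Λ_N/Λ` equals the unipolar Green function
of the renormalized superlattice `Λ'_N = √N·Λ_N` (whose generators are rotated
by the unimodular constant `u` so that the first one is positive real),
evaluated at `√N·z`. -/
theorem sum_green_eq_superlattice_green (ω₁ ω₂ : ℂ)
    (h1 : ω₁.im = 0) (h1' : 0 < ω₁.re) (h2 : 0 < ω₂.im)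
    (harea : ω₁.re * ω₂.im = Real.pi / 2)
    (N : ℕ) (hN : 1 ≤ N)
    (ω₁' ω₂' : ℂ)
    (hω₁' : ω₁' = ((Nat.sqrt N : ℂ) * ω₁ + ω₂) / (N : ℂ))
    (hω₂' : ω₂' = (-(((N - Nat.sqrt N ^ 2 : ℕ) : ℂ)) * ω₁ + (Nat.sqrt N : ℂ) * ω₂) / (N : ℂ))
    (ζ : Fin N → ℂ)
    (hζmem : ∀ j, ζ j ∈ latticeSet ω₁' ω₂')
    (hζrep : ∀ x ∈ latticeSet ω₁' ω₂', ∃! j : Fin N, x - ζ j ∈ latticeSet ω₁ ω₂)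
    (u : ℂ) (hu : ‖u‖ = 1)
    (hrot : (u * ((Real.sqrt N : ℂ) * ω₁')).im = 0)
    (hrot' : 0 < (u * ((Real.sqrt N : ℂ) * ω₁')).re)
    (z : ℂ) (hz : z ∉ latticeSet ω₁' ω₂') :
    ∑ j, Utorus ω₁ ω₂ z (ζ j) =
      Real.log ‖sigmaStar (u * ((Real.sqrt N : ℂ) * ω₁')) (u * ((Real.sqrt N : ℂ) * ω₂'))
          (u * ((Real.sqrt N : ℂ) * z))‖ -
        (N : ℝ) * ‖z‖ ^ 2 -
        Aconst (u * ((Real.sqrt N : ℂ) * ω₁')) (u * ((Real.sqrt N : ℂ) * ω₂')) := by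
  have hN0 : (N : ℂ) ≠ 0 := Nat.cast_ne_zero.2 (Nat.one_le_iff_ne_zero.1 hN)
  rw [Nat.cast_sub (Nat.sqrt_le' N), Nat.cast_pow] at hω₂'
  have h₂' : ω₂' = Nat.sqrt N * ω₁' - ω₁ := by
    rw [hω₁', hω₂']
    field_simp
    ring
  have h₂ : ω₂ = N * ω₁' - Nat.sqrt N * ω₁ := by
    rw [hω₁']
    field_simp
    ring
  have hle : latticeSet ω₁ ω₂ ⊆ latticeSet ω₁' ω₂' :=
    TorusGreen.latticeSet_subset_latticeSet ⟨Nat.sqrt N, -1, by push_cast; linear_combination h₂'⟩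
      ⟨N - Nat.sqrt N ^ 2, Nat.sqrt N, by
        push_cast; linear_combination h₂ - Nat.sqrt N * h₂'⟩
  have him : 0 < ω₁'.im := by
    rw [hω₁', Complex.div_natCast_im]
    simpa [h1] using div_pos h2 (Nat.cast_pos.2 hN)
  have hτ : 0 < (ω₂' / ω₁').im := by
    simpa only [h₂', Complex.ofReal_natCast] using TorusGreen.sub_div_im_pos h1 h1' him (Nat.sqrt N)
  have hc : ‖u * (Real.sqrt N : ℂ)‖ ^ 2 = Fintype.card (Fin N) := by
    simp [hu]
  rw [← mul_assoc] at hrot hrot'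
  simpa only [mul_assoc, Fintype.card_fin] using sum_green_eq_superlattice_green_general ω₁ ω₂
    h1 h1' h2 harea ω₁' ω₂' hle hτ ζ hζmem hζrep _ hc hrot hrot' z hz
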